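/- arXiv:2506.18447 — 2 statements merged into one kernel-verified Lean document; each statement's English description precedes it below -/
import Mathlib

section
/- Let Φ = {f_1,…,f_N} be an iterated function system of contracting similarities on ℝ^d with ratios λ_1,…,λ_N satisfying the open set condition, let p be a probability vector with all p_i > 0, let α satisfy −Σ_{i=1}^N λ_i^{P_α(1)} p_i e^α log p_i < α < −Σ_{i=1}^N λ_i^{s₀} log p_i, and let ℓ : ℕ → ℕ be monotone increasing with liminf_{n→∞} ℓ(n)/log n = 1/α. Then for ℙ_p-almost every ō ∈ Σ: dim_H R(ō,ℓ) = inf_{q∈[0,1]} P_α(q), and H^{s₀}(Λ ∖ R(ō,ℓ)) = H^{s₀}(Λ). -/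
/-!
Write `u i = log (lam i) < 0` and `v i = log (p i) + α`, so that the pressure satisfies
`∑ exp (P q * u i + q * v i) = 1`. The two inequalities on `α` say that `∑ a i * v i` is negative
for the weights `a` at `q = 0` and positive at `q = 1`, so it vanishes at some `q₀ ∈ (0, 1)`. By
convexity of `exp`, `P q₀` is then the global minimum of `P` and `P q₀ < P 0 = s₀`
(`CoverSpec.exists_critical`).

Upper bound (`CoverSpec.ae_dimH_le`). If `β > α`, the word of length `L = ℓ n` starting at position
`n` occurs before time `e^{βL}` for large `n`. A given word `w` does so with probability at most
`min 1 (2 e^{βL} p_w) ≤ 2 (e^{βL} p_w)^{q₀}`. For `s > P q₀` and `β` close to `α` the expected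
value of `∑ λ_w^s` over the distinct words that occur in time is therefore dominated by a convergent
geometric series. Counting each word only once is what produces the exponent `q₀ < 1`.

Lower bound (`CoverSpec.ae_le_dimH`). For `β < γ < α`, almost surely every word of large length `L`
with `p_w ≥ e^{-βL}` occurs before time `e^{γL}` (disjoint blocks are independent, then
Borel–Cantelli), and infinitely many `n` satisfy `n > e^{γ ℓ(n)}`. Hence every sequence whose long
prefixes are all likely lies in the limsup set. The weights `a` at `q₀` have entropy divided by
Lyapunov exponent equal to `P q₀` and sit on the boundary `∑ a v = 0`; a small perturbation `b`
(`CoverSpec.exists_weights`) has `∑ b v > 0` and dimension above any prescribed `s < P q₀`. By the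
law of large numbers the Bernoulli measure of `b` is carried by sequences with likely prefixes, and
the mass distribution principle under the open set condition
(`CoverSpec.hausdorffMeasure_image_ne_zero`) gives dimension at least `s`.

Finally `P q₀ < s₀` makes the covering set `H^{s₀}`-null, which is the second assertion.
-/

open MeasureTheory Filter Topology Set ENNReal

noncomputable section

/-- The cylinder set in `{1,…,N}^ℕ` determined by a finite word `w` of length `m`. -/
def cylinder {N m : ℕ} (w : Fin m → Fin N) : Set (ℕ → Fin N) :=
  {x | ∀ j : Fin m, x (j : ℕ) = w j}

/-- The product `r_{w 0} ⋯ r_{w (m-1)}` of weights along a finite word `w`. -/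
def wordProd {N : ℕ} (r : Fin N → ℝ) {m : ℕ} (w : Fin m → Fin N) : ℝ :=
  ∏ j, r (w j)

/-- The composition `f_{x 0} ∘ f_{x 1} ∘ ⋯ ∘ f_{x (n-1)}` of the maps along
the first `n` symbols of `x`; the coding map is `π x = lim_n prefixMap f x n 0`. -/
def prefixMap {N : ℕ} {E : Type*} (f : Fin N → E → E) (x : ℕ → Fin N) : ℕ → E → E
  | 0 => id
  | n + 1 => fun y => f (x 0) (prefixMap f (fun k => x (k + 1)) n y)

/-- The symbolic limsup set `⋂ₖ ⋃_{n ≥ k} [(σⁿ ō)|_{ℓ(n)}]`; its image under the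
coding map `π` is the dynamical covering set `R(ō, ℓ)`. -/
def limsupCylinders {N : ℕ} (ℓ : ℕ → ℕ) (o : ℕ → Fin N) : Set (ℕ → Fin N) :=
  ⋂ k, ⋃ n, ⋃ _ : k ≤ n, cylinder (fun j : Fin (ℓ n) => o (n + (j : ℕ)))

/-- `m(n) = ⌊#{k ∈ ℕ : ℓ(k) = n}/n⌋`. -/
def countM (ℓ : ℕ → ℕ) (n : ℕ) : ℕ := Nat.card {k : ℕ | ℓ k = n} / n

/-- The probabilistic pressure
`L(s) = limsup_n (1/n) log Σ_{|ȷ|=n} λ_ȷ^s (1 − (1 − p_ȷ)^{m(n)})`. -/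
def pressL {N : ℕ} (lam p : Fin N → ℝ) (m : ℕ → ℕ) (s : ℝ) : ℝ :=
  Filter.limsup (fun n : ℕ => Real.log (∑ w : Fin n → Fin N,
    wordProd lam w ^ s * (1 - (1 - wordProd p w) ^ m n)) / (n : ℝ)) atTop

namespace CoverSpec

/-! ### The pressure function -/

/-- Continuity of the implicitly defined pressure: each level off `P q` is crossed strictly,
and strict inequalities persist for nearby `q`. -/
lemma continuous_pressure {N : ℕ} [NeZero N] (u v : Fin N → ℝ) (hu : ∀ i, u i < 0) (P : ℝ → ℝ)
    (hP : ∀ q, ∑ i, Real.exp (P q * u i + q * v i) = 1) : Continuous P := by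
  have hanti : ∀ q s t : ℝ, s < t →
      ∑ i, Real.exp (t * u i + q * v i) < ∑ i, Real.exp (s * u i + q * v i) := by
    intro q s t hst
    refine Finset.sum_lt_sum_of_nonempty Finset.univ_nonempty fun i _ => ?_
    exact Real.exp_lt_exp.2 (by nlinarith [hu i])
  have hcont : ∀ s : ℝ, Continuous fun q : ℝ => ∑ i, Real.exp (s * u i + q * v i) := by
    intro s; fun_prop
  rw [continuous_iff_continuousAt]
  intro q
  refine tendsto_order.2 ⟨fun s hs => ?_, fun s hs => ?_⟩
  · have h1 : 1 < ∑ i, Real.exp (s * u i + q * v i) := by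
      rw [← hP q]; exact hanti q s (P q) hs
    filter_upwards [(hcont s).continuousAt.eventually (lt_mem_nhds h1)] with r hr
    by_contra hle
    rcases (not_lt.1 hle).lt_or_eq with h | h
    · have := hanti r _ _ h; rw [hP r] at this; linarith
    · rw [← h, hP r] at hr; exact lt_irrefl _ hr
  · have h1 : ∑ i, Real.exp (s * u i + q * v i) < 1 := by
      rw [← hP q]; exact hanti q (P q) s hs
    filter_upwards [(hcont s).continuousAt.eventually (gt_mem_nhds h1)] with r hr
    by_contra hle
    rcases (not_lt.1 hle).lt_or_eq with h | h
    · have := hanti r _ _ h; rw [hP r] at this; linarith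
    · rw [h, hP r] at hr; exact lt_irrefl _ hr

/-- The pressure attains its minimum at an interior point `q₀` of `[0,1]`, characterised by the
vanishing of `∑ aᵢ vᵢ` for the equilibrium weights `aᵢ = exp (P q₀ uᵢ + q₀ vᵢ)`. -/
lemma exists_critical {N : ℕ} [NeZero N] (hN : 2 ≤ N) (u v : Fin N → ℝ) (hu : ∀ i, u i < 0)
    (P : ℝ → ℝ) (hP : ∀ q, ∑ i, Real.exp (P q * u i + q * v i) = 1)
    (h0 : ∑ i, Real.exp (P 0 * u i) * v i < 0)
    (h1 : 0 < ∑ i, Real.exp (P 1 * u i + v i) * v i) :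
    ∃ q0 ∈ Ioo (0 : ℝ) 1, ∑ i, Real.exp (P q0 * u i + q0 * v i) * v i = 0 ∧
      (∀ q, P q0 ≤ P q) ∧ P q0 < P 0 ∧ 0 < P q0 := by
  have hc := continuous_pressure u v hu P hP
  have hF : Continuous fun q => ∑ i, Real.exp (P q * u i + q * v i) * v i := by fun_prop
  obtain ⟨q0, hq0, hz⟩ : (0 : ℝ) ∈
      (fun q => ∑ i, Real.exp (P q * u i + q * v i) * v i) '' Ioo (0 : ℝ) 1 :=
    intermediate_value_Ioo zero_le_one hF.continuousOn ⟨by simpa using h0, by simpa using h1⟩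
  simp only at hz
  set a : Fin N → ℝ := fun i => Real.exp (P q0 * u i + q0 * v i) with ha
  have hapos : ∀ i, 0 < a i := fun i => Real.exp_pos _
  have hasum : ∑ i, a i = 1 := hP q0
  have hav : ∑ i, a i * v i = 0 := hz
  have hau : ∑ i, a i * u i < 0 :=
    Finset.sum_neg (fun i _ => mul_neg_of_pos_of_neg (hapos i) (hu i)) Finset.univ_nonempty
  have hexp : ∀ q, ∑ i, a i * Real.exp ((P q - P q0) * u i + (q - q0) * v i) = 1 := by
    intro q
    rw [← hP q]
    refine Finset.sum_congr rfl fun i _ => ?_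
    rw [ha, ← Real.exp_add]; congr 1; ring
  have hlin : ∀ q, ∑ i, a i * ((P q - P q0) * u i + (q - q0) * v i + 1)
      = (P q - P q0) * ∑ i, a i * u i + 1 := by
    intro q
    have : ∀ i, a i * ((P q - P q0) * u i + (q - q0) * v i + 1)
      = (P q - P q0) * (a i * u i) + (q - q0) * (a i * v i) + a i := fun i => by ring
    simp_rw [this, Finset.sum_add_distrib, ← Finset.mul_sum, hasum, hav]; ring
  have hmin : ∀ q, P q0 ≤ P q := by
    intro q
    have h : ∑ i, a i * ((P q - P q0) * u i + (q - q0) * v i + 1) ≤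
        ∑ i, a i * Real.exp ((P q - P q0) * u i + (q - q0) * v i) :=
      Finset.sum_le_sum fun i _ =>
        mul_le_mul_of_nonneg_left (Real.add_one_le_exp _) (hapos i).le
    rw [hexp, hlin] at h
    by_contra hlt
    have := mul_pos_of_neg_of_neg (sub_neg.2 (not_le.1 hlt)) hau
    linarith
  refine ⟨q0, hq0, hz, hmin, ?_, ?_⟩
  · refine lt_of_le_of_ne (hmin 0) fun heq => ?_
    -- equality forces `1 + x = exp x` termwise, hence `v = 0`
    have hv : ∃ i, v i ≠ 0 := by
      by_contra hv
      push Not at hv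
      simp [hv] at h0
    obtain ⟨i0, hi0⟩ := hv
    have h : ∑ i, a i * ((P 0 - P q0) * u i + (0 - q0) * v i + 1) <
        ∑ i, a i * Real.exp ((P 0 - P q0) * u i + (0 - q0) * v i) := by
      refine Finset.sum_lt_sum (fun i _ =>
        mul_le_mul_of_nonneg_left (Real.add_one_le_exp _) (hapos i).le) ⟨i0, Finset.mem_univ _, ?_⟩
      refine mul_lt_mul_of_pos_left (Real.add_one_lt_exp ?_) (hapos i0)
      have : q0 ≠ 0 := hq0.1.ne'
      simp [heq, this, hi0]
    rw [hexp, hlin, ← heq] at h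
    simp at h
  · -- `P q₀ ∑ aᵢ uᵢ = ∑ aᵢ log aᵢ < 0` because no weight equals one
    have hlt : ∀ i, a i < 1 := by
      intro i
      have : Nontrivial (Fin N) := Fin.nontrivial_iff_two_le.2 hN
      obtain ⟨j, hj⟩ := exists_ne i
      rw [← hasum]
      exact Finset.single_lt_sum hj (Finset.mem_univ _) (Finset.mem_univ _) (hapos j)
        fun k _ _ => (hapos k).le
    have hlog : ∑ i, a i * Real.log (a i) < 0 :=
      Finset.sum_neg (fun i _ => mul_neg_of_pos_of_neg (hapos i)
        (Real.log_neg (hapos i) (hlt i))) Finset.univ_nonempty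
    have : ∑ i, a i * Real.log (a i) = P q0 * ∑ i, a i * u i + q0 * ∑ i, a i * v i := by
      rw [Finset.mul_sum, Finset.mul_sum, ← Finset.sum_add_distrib]
      refine Finset.sum_congr rfl fun i _ => ?_
      simp only [ha, Real.log_exp]; ring
    rw [this, hav] at hlog
    by_contra hle
    have := mul_nonneg_of_nonpos_of_nonpos (not_lt.1 hle) hau.le
    linarith

/-- Weights close to equilibrium whose `v`-average is strictly positive, and whose
entropy/Lyapunov quotient still exceeds `s`. They are obtained by perturbing the
equilibrium weights `a` towards weights `c` with positive `v`-average. -/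
lemma exists_weights {N : ℕ} (u v a c : Fin N → ℝ) (s : ℝ)
    (ha : ∀ i, 0 < a i) (hc : ∀ i, 0 < c i) (hasum : ∑ i, a i = 1) (hcsum : ∑ i, c i = 1)
    (hav : ∑ i, a i * v i = 0) (hcv : 0 < ∑ i, c i * v i)
    (hs : ∑ i, a i * (Real.log (a i) - s * u i) < 0) :
    ∃ b : Fin N → ℝ, (∀ i, 0 < b i) ∧ ∑ i, b i = 1 ∧ 0 < ∑ i, b i * v i ∧
      ∑ i, b i * (Real.log (b i) - s * u i) < 0 := by
  let b : ℝ → Fin N → ℝ := fun t i => (1 - t) * a i + t * c i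
  have hcont : Continuous fun t => ∑ i, (b t i * Real.log (b t i) - s * (b t i * u i)) := by
    refine continuous_finsetSum _ fun i _ => Continuous.sub ?_ (by fun_prop)
    exact Real.continuous_mul_log.comp (by fun_prop : Continuous fun t => b t i)
  have h0 : ∑ i, (b 0 i * Real.log (b 0 i) - s * (b 0 i * u i)) < 0 := by
    refine lt_of_eq_of_lt (Finset.sum_congr rfl fun i _ => ?_) hs
    simp only [b]; ring_nf
  have hev : ∀ᶠ t in 𝓝[>] (0 : ℝ), ∑ i, (b t i * Real.log (b t i) - s * (b t i * u i)) < 0 :=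
    nhdsWithin_le_nhds (hcont.continuousAt.eventually (gt_mem_nhds h0))
  have hev2 : ∀ᶠ t in 𝓝[>] (0 : ℝ), t ∈ Ioo (0 : ℝ) 1 := Ioo_mem_nhdsGT zero_lt_one
  obtain ⟨t, ht, ht0, ht1⟩ := (hev.and hev2).exists
  refine ⟨b t, fun i => ?_, ?_, ?_, ?_⟩
  · have := mul_pos (sub_pos.2 ht1) (ha i)
    have := mul_pos ht0 (hc i)
    simp only [b]; linarith
  · simp only [b, Finset.sum_add_distrib, ← Finset.mul_sum, hasum, hcsum]; ring
  · have : ∑ i, b t i * v i = (1 - t) * ∑ i, a i * v i + t * ∑ i, c i * v i := by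
      rw [Finset.mul_sum, Finset.mul_sum, ← Finset.sum_add_distrib]
      exact Finset.sum_congr rfl fun i _ => by simp only [b]; ring
    rw [this, hav]
    have := mul_pos ht0 hcv
    linarith
  · refine lt_of_eq_of_lt (Finset.sum_congr rfl fun i _ => ?_) ht
    ring

/-- For `s` above the pressure `t` at `q`, the pressure sum stays below `1` after a small increase
of `v`, that is, of `α`. -/
lemma exists_subcritical {N : ℕ} [NeZero N] (u v : Fin N → ℝ) (hu : ∀ i, u i < 0) (q t s : ℝ)
    (ht : ∑ i, Real.exp (t * u i + q * v i) = 1) (hts : t < s) :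
    ∃ ε > 0, ∑ i, Real.exp (s * u i + q * (v i + ε)) < 1 := by
  have h0 : ∑ i, Real.exp (s * u i + q * (v i + 0)) < 1 := by
    rw [← ht]
    refine Finset.sum_lt_sum_of_nonempty Finset.univ_nonempty fun i _ => ?_
    exact Real.exp_lt_exp.2 (by nlinarith [hu i])
  have hcont : Continuous fun ε : ℝ => ∑ i, Real.exp (s * u i + q * (v i + ε)) := by fun_prop
  have hev : ∀ᶠ ε in 𝓝[>] (0 : ℝ), ∑ i, Real.exp (s * u i + q * (v i + ε)) < 1 :=
    nhdsWithin_le_nhds (hcont.continuousAt.eventually (gt_mem_nhds h0))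
  obtain ⟨ε, h, hε⟩ := (hev.and self_mem_nhdsWithin).exists
  exact ⟨ε, hε, h⟩

/-! ### Bernoulli measures on the symbolic space -/

lemma measurableSet_cylinder {N m : ℕ} (w : Fin m → Fin N) :
    MeasurableSet (_root_.cylinder w) := by
  have : _root_.cylinder w = ⋂ j : Fin m, {x : ℕ → Fin N | x (j : ℕ) = w j} := by
    ext x; simp [_root_.cylinder]
  rw [this]
  exact MeasurableSet.iInter fun j =>
    measurableSet_eq_fun (measurable_pi_apply (j : ℕ)) measurable_const

/-- Sets depending on finitely many coordinates are measurable. -/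
lemma measurableSet_prefix {N : ℕ} (n m : ℕ) (S : Set (Fin m → Fin N)) :
    MeasurableSet {o : ℕ → Fin N | (fun j : Fin m => o (n + j)) ∈ S} :=
  measurableSet_preimage (measurable_pi_lambda _ fun _ => measurable_pi_apply _)
    (Set.toFinite S).measurableSet

lemma wordProd_append {N : ℕ} (r : Fin N → ℝ) {n m : ℕ} (u : Fin n → Fin N) (v : Fin m → Fin N) :
    wordProd r (Fin.append u v) = wordProd r u * wordProd r v := by
  simp [wordProd, Fin.prod_univ_add]

lemma wordProd_pos {N : ℕ} {r : Fin N → ℝ} (hr : ∀ i, 0 < r i) {m : ℕ} (w : Fin m → Fin N) :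
    0 < wordProd r w := Finset.prod_pos fun _ _ => hr _

lemma sum_wordProd {N : ℕ} (r : Fin N → ℝ) (m : ℕ) :
    ∑ w : Fin m → Fin N, wordProd r w = (∑ i, r i) ^ m := by
  have := (Finset.prod_univ_sum (fun _ : Fin m => (Finset.univ : Finset (Fin N)))
    (fun _ i => r i)).symm
  simpa [wordProd, Fintype.piFinset_univ] using this

/-- Two consecutive blocks of a Bernoulli sequence are independent. -/
lemma measure_two_blocks {N : ℕ} {p : Fin N → ℝ} (hp : ∀ i, 0 < p i)
    {μ : Measure (ℕ → Fin N)}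
    (hμ : ∀ (m : ℕ) (w : Fin m → Fin N), μ (_root_.cylinder w) = ENNReal.ofReal (wordProd p w))
    (n m : ℕ) (S : Finset (Fin n → Fin N)) (T : Finset (Fin m → Fin N)) :
    μ {o | (fun j : Fin n => o j) ∈ S ∧ (fun j : Fin m => o (n + j)) ∈ T} =
      ENNReal.ofReal ((∑ u ∈ S, wordProd p u) * ∑ v ∈ T, wordProd p v) := by
  have hset : {o : ℕ → Fin N | (fun j : Fin n => o j) ∈ S ∧ (fun j : Fin m => o (n + j)) ∈ T} =
      ⋃ x ∈ S ×ˢ T, _root_.cylinder (Fin.append x.1 x.2) := by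
    have key : ∀ (o : ℕ → Fin N) (u : Fin n → Fin N) (v : Fin m → Fin N),
        o ∈ _root_.cylinder (Fin.append u v) ↔
          (fun j : Fin n => o j) = u ∧ (fun j : Fin m => o (n + j)) = v := by
      intro o u v
      simp only [_root_.cylinder, mem_ofPred_eq, Fin.forall_fin_add, Fin.append_left,
        Fin.append_right, Fin.val_castAdd, Fin.val_natAdd, funext_iff]
    ext o
    simp only [mem_ofPred_eq, mem_iUnion, key, exists_prop, Finset.mem_product, Prod.exists]
    constructor
    · rintro ⟨h1, h2⟩; exact ⟨_, _, ⟨h1, h2⟩, rfl, rfl⟩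
    · rintro ⟨u, v, ⟨h1, h2⟩, rfl, rfl⟩; exact ⟨h1, h2⟩
  rw [hset, measure_biUnion_finset]
  · rw [Finset.sum_mul_sum, ← Finset.sum_product', ENNReal.ofReal_sum_of_nonneg]
    · exact Finset.sum_congr rfl fun x _ => by rw [hμ, wordProd_append]
    · exact fun x _ => (mul_pos (wordProd_pos hp _) (wordProd_pos hp _)).le
  · intro x _ y _ hxy
    refine Set.disjoint_left.2 fun o hx hy => hxy ?_
    have : Fin.append x.1 x.2 = Fin.append y.1 y.2 := by
      funext j; rw [← hx j, ← hy j]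
    have h1 : x.1 = y.1 := by
      funext j; simpa using congrFun this (Fin.castAdd m j)
    have h2 : x.2 = y.2 := by
      funext j; simpa using congrFun this (Fin.natAdd n j)
    exact Prod.ext h1 h2
  · exact fun x _ => measurableSet_cylinder _

/-- The probability that a given word occurs at position `n`. -/
lemma measure_occurs {N : ℕ} {p : Fin N → ℝ} (hp : ∀ i, 0 < p i) (hpsum : ∑ i, p i = 1)
    {μ : Measure (ℕ → Fin N)}
    (hμ : ∀ (m : ℕ) (w : Fin m → Fin N), μ (_root_.cylinder w) = ENNReal.ofReal (wordProd p w))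
    (n : ℕ) {m : ℕ} (w : Fin m → Fin N) :
    μ {o | (fun j : Fin m => o (n + j)) = w} = ENNReal.ofReal (wordProd p w) := by
  have := measure_two_blocks hp hμ n m Finset.univ {w}
  simpa [sum_wordProd, hpsum] using this

/-- The probability that `w` occurs at none of the positions `L, 2L, …, KL`, where `L = |w|`. -/
lemma measure_avoid {N : ℕ} {p : Fin N → ℝ} (hp : ∀ i, 0 < p i) (hpsum : ∑ i, p i = 1)
    {μ : Measure (ℕ → Fin N)} [IsProbabilityMeasure μ]
    (hμ : ∀ (m : ℕ) (w : Fin m → Fin N), μ (_root_.cylinder w) = ENNReal.ofReal (wordProd p w))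
    {L : ℕ} (w : Fin L → Fin N) (K : ℕ) :
    μ {o | ∀ k < K, (fun j : Fin L => o ((k + 1) * L + j)) ≠ w} =
      ENNReal.ofReal ((1 - wordProd p w) ^ K) := by
  classical
  induction K with
  | zero => simp
  | succ K ih =>
    -- the event for `K` depends on the first `(K + 1) L` symbols only
    let S : Finset (Fin ((K + 1) * L) → Fin N) := Finset.univ.filter fun x =>
      ∃ o : ℕ → Fin N, (fun j : Fin ((K + 1) * L) => o j) = x ∧
        ∀ k < K, (fun j : Fin L => o ((k + 1) * L + j)) ≠ w
    have hS : ∀ o : ℕ → Fin N, (fun j : Fin ((K + 1) * L) => o j) ∈ S ↔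
        ∀ k < K, (fun j : Fin L => o ((k + 1) * L + j)) ≠ w := by
      intro o
      simp only [S, Finset.mem_filter, Finset.mem_univ, true_and]
      constructor
      · rintro ⟨o', h1, h2⟩ k hk heq
        refine h2 k hk ?_
        rw [← heq]
        funext j
        have hlt : (k + 1) * L + (j : ℕ) < (K + 1) * L := by
          have h3 : (k + 1) * L + L ≤ (K + 1) * L := by
            rw [← Nat.succ_mul]; exact Nat.mul_le_mul_right _ (by omega)
          have := j.2
          omega
        exact congrFun h1 ⟨_, hlt⟩
      · intro h; exact ⟨o, rfl, h⟩
    have hsplit : {o : ℕ → Fin N | ∀ k < K + 1, (fun j : Fin L => o ((k + 1) * L + j)) ≠ w} =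
        {o | (fun j : Fin ((K + 1) * L) => o j) ∈ S ∧
          (fun j : Fin L => o ((K + 1) * L + j)) ∈ ({w}ᶜ : Finset (Fin L → Fin N))} := by
      ext o
      simp only [mem_ofPred_eq, hS, Finset.mem_compl, Finset.mem_singleton]
      constructor
      · intro h; exact ⟨fun k hk => h k (by omega), h K (by omega)⟩
      · rintro ⟨h1, h2⟩ k hk
        rcases Nat.lt_succ_iff_lt_or_eq.1 hk with h | rfl
        · exact h1 k h
        · exact h2
    have hfirst : μ {o | (fun j : Fin ((K + 1) * L) => o j) ∈ S} =
        ENNReal.ofReal (∑ u ∈ S, wordProd p u) := by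
      have := measure_two_blocks hp hμ ((K + 1) * L) 0 S Finset.univ
      simpa only [Finset.mem_univ, and_true, sum_wordProd, hpsum, one_pow, mul_one] using this
    have hfirst2 : ENNReal.ofReal (∑ u ∈ S, wordProd p u) =
        ENNReal.ofReal ((1 - wordProd p w) ^ K) := by
      rw [← hfirst, ← ih]; congr 1; ext o; exact hS o
    have hcompl : ∑ v ∈ ({w}ᶜ : Finset (Fin L → Fin N)), wordProd p v = 1 - wordProd p w := by
      have := Finset.sum_compl_add_sum ({w} : Finset (Fin L → Fin N)) (wordProd p)
      rw [sum_wordProd, hpsum, one_pow, Finset.sum_singleton] at this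
      linarith
    have hnn : 0 ≤ 1 - wordProd p w := by
      rw [← hcompl]; exact Finset.sum_nonneg fun v _ => (wordProd_pos hp v).le
    rw [hsplit, measure_two_blocks hp hμ, hcompl, ENNReal.ofReal_mul
      (Finset.sum_nonneg fun v _ => (wordProd_pos hp v).le), hfirst2,
      ← ENNReal.ofReal_mul (pow_nonneg hnn _), pow_succ]

/-- Existence of the Bernoulli measure with weights `b`, with the strong law of large numbers for
functions of one symbol. -/
lemma exists_bernoulli {N : ℕ} (b : Fin N → ℝ) (hb : ∀ i, 0 < b i) (hbsum : ∑ i, b i = 1) :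
    ∃ ν : Measure (ℕ → Fin N), IsProbabilityMeasure ν ∧
      (∀ (m : ℕ) (w : Fin m → Fin N),
        ν (_root_.cylinder w) = ENNReal.ofReal (wordProd b w)) ∧
      ∀ φ : Fin N → ℝ, ∑ i, b i * φ i < 0 →
        ∀ᵐ x ∂ν, ∀ᶠ n : ℕ in atTop, ∑ j ∈ Finset.range n, φ (x j) < 0 := by
  let ρ : Measure (Fin N) := ∑ i, ENNReal.ofReal (b i) • Measure.dirac i
  have hρs : ∀ i, ρ {i} = ENNReal.ofReal (b i) := by
    intro i
    simp [ρ, Set.indicator_apply]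
  have hρp : IsProbabilityMeasure ρ := by
    constructor
    simp [ρ, ← ENNReal.ofReal_sum_of_nonneg fun i _ => (hb i).le, hbsum]
  let ν : Measure (ℕ → Fin N) := Measure.infinitePi fun _ => ρ
  have hmap : ∀ i : ℕ, ν.map (fun x => x i) = ρ := fun i =>
    (measurePreserving_eval_infinitePi (fun _ : ℕ => ρ) i).map_eq
  have hind : ProbabilityTheory.iIndepFun (fun (i : ℕ) (x : ℕ → Fin N) => x i) ν := by
    rw [ProbabilityTheory.iIndepFun_iff_map_fun_eq_infinitePi_map (by fun_prop)]
    simp_rw [hmap]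
    exact Measure.map_id'
  refine ⟨ν, inferInstance, fun m w => ?_, fun φ hφ => ?_⟩
  · have hset : _root_.cylinder w = Set.pi (Finset.range m : Set ℕ)
        (fun j => if h : j < m then {w ⟨j, h⟩} else univ) := by
      ext x
      simp only [_root_.cylinder, mem_ofPred_eq, Set.mem_pi, Finset.coe_range, mem_Iio]
      constructor
      · intro h j hj; simp [hj, h ⟨j, hj⟩]
      · intro h j; simpa [j.2] using h j j.2
    rw [hset, Measure.infinitePi_pi _ (fun i _ => MeasurableSet.of_discrete),
      Finset.prod_range, wordProd, ENNReal.ofReal_prod_of_nonneg fun i _ => (hb _).le]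
    exact Finset.prod_congr rfl fun j _ => by simp [hρs]
  · have hφm : Measurable φ := measurable_of_countable φ
    have hX : ∀ i : ℕ, Measurable fun x : ℕ → Fin N => φ (x i) := fun i =>
      hφm.comp (measurable_pi_apply i)
    have hphi : ∫ x, φ (x 0) ∂ν = ∑ i, b i * φ i := by
      rw [← integral_map (φ := fun x : ℕ → Fin N => x 0) (f := φ)
        (measurable_pi_apply 0).aemeasurable hφm.aestronglyMeasurable, hmap,
        integral_fintype .of_finite]
      refine Finset.sum_congr rfl fun i _ => ?_
      simp [Measure.real, hρs, (hb i).le]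
    have hslln := ProbabilityTheory.strong_law_ae_real (μ := ν)
      (fun (i : ℕ) (x : ℕ → Fin N) => φ (x i))
      ((integrable_map_measure (f := fun x : ℕ → Fin N => x 0) (g := φ)
        hφm.aestronglyMeasurable (measurable_pi_apply 0).aemeasurable).1
          (Integrable.of_finite))
      (fun i j hij => (hind.indepFun hij).comp hφm hφm)
      (fun i => ⟨(hX i).aemeasurable, (hX 0).aemeasurable, by
        have h : ∀ i : ℕ, ν.map (fun x : ℕ → Fin N => φ (x i)) = ρ.map φ := fun i => by
          rw [← hmap i, Measure.map_map hφm (measurable_pi_apply i)]; rfl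
        rw [h, h]⟩)
    filter_upwards [hslln] with x hx
    rw [hphi] at hx
    filter_upwards [hx.eventually (gt_mem_nhds hφ), eventually_gt_atTop 0] with n hn hn0
    have : (0 : ℝ) < n := by exact_mod_cast hn0
    by_contra hle
    exact absurd (div_nonneg (not_lt.1 hle) this.le) (not_le.2 hn)

/-! ### Geometry of the iterated function system -/

section Geometry

variable {N d : ℕ} {lam : Fin N → ℝ}
  {f : Fin N → EuclideanSpace ℝ (Fin d) → EuclideanSpace ℝ (Fin d)}
  {π : (ℕ → Fin N) → EuclideanSpace ℝ (Fin d)}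

lemma exists_lam_bounds [NeZero N] (hlam : ∀ i, lam i ∈ Set.Ioo (0 : ℝ) 1) :
    ∃ c M : ℝ, 0 < c ∧ c < 1 ∧ 0 < M ∧ M < 1 ∧ ∀ i, c ≤ lam i ∧ lam i ≤ M := by
  obtain ⟨i, hi⟩ := Finite.exists_min lam
  obtain ⟨j, hj⟩ := Finite.exists_max lam
  exact ⟨lam i, lam j, (hlam i).1, (hlam i).2, (hlam j).1, (hlam j).2, fun k => ⟨hi k, hj k⟩⟩

lemma prefixProd_pos (hlam : ∀ i, 0 < lam i) (x : ℕ → Fin N) (n : ℕ) :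
    0 < ∏ j ∈ Finset.range n, lam (x j) := Finset.prod_pos fun _ _ => hlam _

lemma prefixProd_le {M : ℝ} (hlam : ∀ i, 0 < lam i) (hM : ∀ i, lam i ≤ M) (x : ℕ → Fin N)
    (n : ℕ) : ∏ j ∈ Finset.range n, lam (x j) ≤ M ^ n := by
  have := Finset.prod_le_prod (s := Finset.range n) (fun j _ => (hlam (x j)).le)
    (fun j _ => hM (x j))
  simpa using this

lemma le_prefixProd {c : ℝ} (hc : 0 < c) (hM : ∀ i, c ≤ lam i) (x : ℕ → Fin N)
    (n : ℕ) : c ^ n ≤ ∏ j ∈ Finset.range n, lam (x j) := by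
  have := Finset.prod_le_prod (s := Finset.range n) (fun j _ => hc.le)
    (fun j _ => hM (x j))
  simpa using this

lemma tendsto_prefixProd [NeZero N] (hlam : ∀ i, lam i ∈ Set.Ioo (0 : ℝ) 1) (x : ℕ → Fin N) :
    Tendsto (fun n => ∏ j ∈ Finset.range n, lam (x j)) atTop (𝓝 0) := by
  obtain ⟨c, M, -, -, hM0, hM1, h⟩ := exists_lam_bounds hlam
  exact squeeze_zero (fun n => (prefixProd_pos (fun i => (hlam i).1) x n).le)
    (fun n => prefixProd_le (fun i => (hlam i).1) (fun i => (h i).2) x n)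
    (tendsto_pow_atTop_nhds_zero_of_lt_one hM0.le hM1)

lemma dist_prefixMap (hf : ∀ i x y, dist (f i x) (f i y) = lam i * dist x y)
    (x : ℕ → Fin N) (n : ℕ) (y z : EuclideanSpace ℝ (Fin d)) :
    dist (prefixMap f x n y) (prefixMap f x n z) =
      (∏ j ∈ Finset.range n, lam (x j)) * dist y z := by
  induction n generalizing x with
  | zero => simp [prefixMap]
  | succ n ih =>
    simp only [prefixMap]
    rw [hf, ih, Finset.prod_range_succ']
    ring

lemma prefixMap_add (x : ℕ → Fin N) (n m : ℕ) (y : EuclideanSpace ℝ (Fin d)) :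
    prefixMap f x (n + m) y = prefixMap f x n (prefixMap f (fun k => x (k + n)) m y) := by
  induction n generalizing x with
  | zero => simp [prefixMap]
  | succ n ih =>
    rw [Nat.succ_add]
    simp only [prefixMap]
    rw [ih]
    simp only [add_assoc, add_comm n 1]

lemma prefixMap_congr {x y : ℕ → Fin N} {n : ℕ} (h : ∀ j < n, x j = y j) :
    prefixMap f x n = prefixMap f y n := by
  induction n generalizing x y with
  | zero => rfl
  | succ n ih =>
    simp only [prefixMap]
    rw [h 0 (by omega), ih fun j hj => h (j + 1) (by omega)]

lemma continuous_prefixMap (hf : ∀ i x y, dist (f i x) (f i y) = lam i * dist x y)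
    (x : ℕ → Fin N) (n : ℕ) : Continuous (prefixMap f x n) := by
  have hfc : ∀ i, Continuous (f i) := fun i =>
    (LipschitzWith.of_dist_le' (K := lam i) fun x y => (hf i x y).le).continuous
  induction n generalizing x with
  | zero => exact continuous_id
  | succ n ih => exact (hfc _).comp (ih _)

lemma coding_eq (hf : ∀ i x y, dist (f i x) (f i y) = lam i * dist x y)
    (hπ : ∀ x, Tendsto (fun n => prefixMap f x n 0) atTop (𝓝 (π x)))
    (x : ℕ → Fin N) (n : ℕ) : π x = prefixMap f x n (π fun k => x (k + n)) := by
  have h1 : Tendsto (fun m => prefixMap f x (n + m) 0) atTop (𝓝 (π x)) :=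
    (hπ x).comp (tendsto_atTop_mono (fun m => Nat.le_add_left m n) tendsto_id)
  have h2 := ((continuous_prefixMap hf x n).tendsto _).comp (hπ fun k => x (k + n))
  refine tendsto_nhds_unique h1 (h2.congr fun m => ?_)
  exact (prefixMap_add x n m 0).symm

lemma coding_mem [NeZero N] (hlam : ∀ i, lam i ∈ Set.Ioo (0 : ℝ) 1)
    (hf : ∀ i x y, dist (f i x) (f i y) = lam i * dist x y)
    (hπ : ∀ x, Tendsto (fun n => prefixMap f x n 0) atTop (𝓝 (π x)))
    {Λ : Set (EuclideanSpace ℝ (Fin d))}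
    (hΛne : Λ.Nonempty) (hΛc : IsCompact Λ) (hΛ : Λ = ⋃ i, f i '' Λ) (x : ℕ → Fin N) :
    π x ∈ Λ := by
  obtain ⟨z, hz⟩ := hΛne
  have hmem : ∀ (n : ℕ) (x : ℕ → Fin N), prefixMap f x n z ∈ Λ := by
    intro n
    induction n with
    | zero => exact fun _ => hz
    | succ n ih =>
      intro x
      rw [hΛ]
      exact mem_iUnion.2 ⟨x 0, mem_image_of_mem _ (ih _)⟩
  have hdist : Tendsto (fun n => dist (prefixMap f x n 0) (prefixMap f x n z)) atTop (𝓝 0) := by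
    simp_rw [dist_prefixMap hf]
    simpa using (tendsto_prefixProd hlam x).mul_const (dist 0 z)
  exact hΛc.isClosed.mem_of_tendsto ((tendsto_iff_of_dist hdist).1 (hπ x))
    (Eventually.of_forall fun n => hmem n x)

lemma dist_coding_le [NeZero N] (hlam : ∀ i, lam i ∈ Set.Ioo (0 : ℝ) 1)
    (hf : ∀ i x y, dist (f i x) (f i y) = lam i * dist x y)
    (hπ : ∀ x, Tendsto (fun n => prefixMap f x n 0) atTop (𝓝 (π x)))
    {D : ℝ} (hD : ∀ x y, dist (π x) (π y) ≤ D) {x y : ℕ → Fin N} {n : ℕ}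
    (h : ∀ j < n, x j = y j) :
    dist (π x) (π y) ≤ (∏ j ∈ Finset.range n, lam (x j)) * D := by
  rw [coding_eq hf hπ x n, coding_eq hf hπ y n, ← prefixMap_congr (f := f) h, dist_prefixMap hf]
  exact mul_le_mul_of_nonneg_left (hD _ _) (prefixProd_pos (fun i => (hlam i).1) x n).le

lemma measurable_coding (hf : ∀ i x y, dist (f i x) (f i y) = lam i * dist x y)
    (hπ : ∀ x, Tendsto (fun n => prefixMap f x n 0) atTop (𝓝 (π x))) : Measurable π := by
  refine measurable_of_tendsto_metrizable (f := fun n x => prefixMap f x n 0) (fun n => ?_)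
    (tendsto_pi_nhds.2 hπ)
  have hfc : ∀ i, Continuous (f i) := fun i =>
    (LipschitzWith.of_dist_le' (K := lam i) fun x y => (hf i x y).le).continuous
  have hunc : Measurable fun a : Fin N × EuclideanSpace ℝ (Fin d) => f a.1 a.2 :=
    measurable_from_prod_countable_right fun i => (hfc i).measurable
  induction n with
  | zero => exact measurable_const
  | succ n ih =>
    have hshift : Measurable fun (x : ℕ → Fin N) (k : ℕ) => x (k + 1) :=
      measurable_pi_lambda _ fun k => measurable_pi_apply (k + 1)
    have h0 : Measurable fun x : ℕ → Fin N => x 0 := measurable_pi_apply 0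
    exact hunc.comp (h0.prodMk (ih.comp hshift))

/-- A similarity of a Euclidean space is onto, since an isometry of it is affine. -/
lemma similarity_surjective {r : ℝ} (hr : 0 < r)
    {g : EuclideanSpace ℝ (Fin d) → EuclideanSpace ℝ (Fin d)}
    (hg : ∀ x y, dist (g x) (g y) = r * dist x y) : Function.Surjective g := by
  have hiso : Isometry fun x => r⁻¹ • g x := by
    refine Isometry.of_dist_eq fun x y => ?_
    rw [dist_smul₀, hg, Real.norm_of_nonneg (inv_pos.2 hr).le]
    field_simp
  have hsurj : Function.Surjective hiso.affineIsometryOfStrictConvexSpace := by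
    have hl := LinearMap.injective_iff_surjective.1
      hiso.affineIsometryOfStrictConvexSpace.linearIsometry.injective
    exact (AffineMap.linear_surjective_iff
      hiso.affineIsometryOfStrictConvexSpace.toAffineMap).1 hl
  intro y
  obtain ⟨x, hx⟩ := hsurj (r⁻¹ • y)
  refine ⟨x, ?_⟩
  have : r⁻¹ • g x = r⁻¹ • y := hx
  exact smul_right_injective _ (inv_ne_zero hr.ne') this

lemma ball_subset_image (hlam : ∀ i, 0 < lam i)
    (hf : ∀ i x y, dist (f i x) (f i y) = lam i * dist x y)
    (x : ℕ → Fin N) (n : ℕ) (x0 : EuclideanSpace ℝ (Fin d)) (ρ : ℝ) :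
    Metric.ball (prefixMap f x n x0) ((∏ j ∈ Finset.range n, lam (x j)) * ρ) ⊆
      prefixMap f x n '' Metric.ball x0 ρ := by
  intro y hy
  have hpos := prefixProd_pos hlam x n
  obtain ⟨z, rfl⟩ := similarity_surjective hpos (dist_prefixMap hf x n) y
  refine ⟨z, ?_, rfl⟩
  rw [Metric.mem_ball, dist_prefixMap hf] at hy
  exact lt_of_mul_lt_mul_left hy hpos.le

lemma prefixMap_image_subset {U : Set (EuclideanSpace ℝ (Fin d))}
    (hUsub : ∀ i, f i '' U ⊆ U) (x : ℕ → Fin N) (n : ℕ) : prefixMap f x n '' U ⊆ U := by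
  induction n generalizing x with
  | zero => simp [prefixMap]
  | succ n ih =>
    rintro _ ⟨y, hy, rfl⟩
    exact hUsub (x 0) (mem_image_of_mem _ (ih _ (mem_image_of_mem _ hy)))

/-- Under the open set condition, incomparable words give disjoint copies of `U`. -/
lemma disjoint_prefixMap (hlam : ∀ i, 0 < lam i)
    (hf : ∀ i x y, dist (f i x) (f i y) = lam i * dist x y)
    {U : Set (EuclideanSpace ℝ (Fin d))} (hUsub : ∀ i, f i '' U ⊆ U)
    (hUdisj : Pairwise fun i j => Disjoint (f i '' U) (f j '' U))
    (j : ℕ) (x y : ℕ → Fin N) (n m : ℕ) (hn : j < n) (hm : j < m) (hxy : x j ≠ y j) :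
    Disjoint (prefixMap f x n '' U) (prefixMap f y m '' U) := by
  induction j generalizing x y n m with
  | zero =>
    obtain ⟨n, rfl⟩ := Nat.exists_eq_succ_of_ne_zero hn.ne'
    obtain ⟨m, rfl⟩ := Nat.exists_eq_succ_of_ne_zero hm.ne'
    refine (hUdisj hxy).mono ?_ ?_
    · rintro _ ⟨z, hz, rfl⟩
      exact mem_image_of_mem _ (prefixMap_image_subset hUsub _ n (mem_image_of_mem _ hz))
    · rintro _ ⟨z, hz, rfl⟩
      exact mem_image_of_mem _ (prefixMap_image_subset hUsub _ m (mem_image_of_mem _ hz))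
  | succ j ih =>
    obtain ⟨n, rfl⟩ := Nat.exists_eq_succ_of_ne_zero (show n ≠ 0 by omega)
    obtain ⟨m, rfl⟩ := Nat.exists_eq_succ_of_ne_zero (show m ≠ 0 by omega)
    by_cases h0 : x 0 = y 0
    · have hinj : Function.Injective (f (x 0)) := by
        intro a b hab
        have := hf (x 0) a b
        rw [hab, dist_self] at this
        have := (mul_eq_zero.1 this.symm).resolve_left (hlam _).ne'
        exact dist_eq_zero.1 this
      have := ih (fun k => x (k + 1)) (fun k => y (k + 1)) n m (by omega) (by omega) hxy
      have h2 := (Set.disjoint_image_iff hinj).2 this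
      rw [Set.image_image, Set.image_image] at h2
      simpa only [prefixMap, ← h0] using h2
    · refine (hUdisj h0).mono ?_ ?_
      · rintro _ ⟨z, hz, rfl⟩
        exact mem_image_of_mem _ (prefixMap_image_subset hUsub _ n (mem_image_of_mem _ hz))
      · rintro _ ⟨z, hz, rfl⟩
        exact mem_image_of_mem _ (prefixMap_image_subset hUsub _ m (mem_image_of_mem _ hz))

/-- Volume comparison: at most `(R/ρ)^d` disjoint balls of radius `ρ` fit into one of radius `R`. -/
lemma card_le_of_disjoint_balls {ι : Type*} (T : Finset ι) (g : ι → EuclideanSpace ℝ (Fin d))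
    (z : EuclideanSpace ℝ (Fin d)) {ρ R : ℝ} (hρ : 0 < ρ) (hR : 0 < R)
    (hdisj : (T : Set ι).PairwiseDisjoint fun i => Metric.ball (g i) ρ)
    (hsub : ∀ i ∈ T, Metric.ball (g i) ρ ⊆ Metric.ball z R) :
    (T.card : ℝ) ≤ (R / ρ) ^ d := by
  have h1 : volume (⋃ i ∈ T, Metric.ball (g i) ρ) ≤ volume (Metric.ball z R) :=
    measure_mono (iUnion₂_subset hsub)
  rw [measure_biUnion_finset hdisj fun i _ => measurableSet_ball] at h1
  simp_rw [Measure.addHaar_ball_of_pos volume _ hρ, Measure.addHaar_ball_of_pos volume _ hR] at h1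
  rw [Finset.sum_const, nsmul_eq_mul, ← mul_assoc, finrank_euclideanSpace_fin] at h1
  have hb0 : volume (Metric.ball (0 : EuclideanSpace ℝ (Fin d)) 1) ≠ 0 :=
    (Metric.measure_ball_pos volume _ one_pos).ne'
  have hb1 : volume (Metric.ball (0 : EuclideanSpace ℝ (Fin d)) 1) ≠ ∞ :=
    measure_ball_lt_top.ne
  rw [ENNReal.mul_le_mul_iff_left hb0 hb1, ← ENNReal.ofReal_natCast,
    ← ENNReal.ofReal_mul (Nat.cast_nonneg _), ENNReal.ofReal_le_ofReal_iff (by positivity)] at h1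
  rw [div_pow, le_div_iff₀ (by positivity)]
  exact h1

end Geometry

/-! ### Mass distribution under the open set condition -/

section Mass

variable {N d : ℕ} {lam : Fin N → ℝ}
  {f : Fin N → EuclideanSpace ℝ (Fin d) → EuclideanSpace ℝ (Fin d)}
  {π : (ℕ → Fin N) → EuclideanSpace ℝ (Fin d)}

/-- The stopping time at which the contraction ratio along a sequence first drops to `r`. -/
lemma exists_stopping [NeZero N] (hlam : ∀ i, lam i ∈ Set.Ioo (0 : ℝ) 1) {c : ℝ} (hc : 0 < c)
    (hcl : ∀ i, c ≤ lam i) {r : ℝ} (hr0 : 0 < r) (hr1 : r < 1) :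
    ∃ n : (ℕ → Fin N) → ℕ, ∀ x, ∏ j ∈ Finset.range (n x), lam (x j) ≤ r ∧
      c * r < ∏ j ∈ Finset.range (n x), lam (x j) ∧
      ∀ y, (∀ j, j < n x → j < n y → x j = y j) → n x = n y := by
  classical
  have hex : ∀ x : ℕ → Fin N, ∃ n, ∏ j ∈ Finset.range n, lam (x j) ≤ r := fun x =>
    ((tendsto_prefixProd hlam x).eventually (ge_mem_nhds hr0)).exists
  have hle : ∀ x y : ℕ → Fin N,
      (∀ j, j < Nat.find (hex x) → j < Nat.find (hex y) → x j = y j) →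
      Nat.find (hex x) ≤ Nat.find (hex y) := by
    intro x y h
    by_contra hlt
    rw [not_le] at hlt
    refine Nat.find_min (hex x) hlt ?_
    rw [Finset.prod_congr rfl fun j hj => by
      rw [h j ((Finset.mem_range.1 hj).trans hlt) (Finset.mem_range.1 hj)]]
    exact Nat.find_spec (hex y)
  refine ⟨fun x => Nat.find (hex x), fun x => ⟨Nat.find_spec (hex x), ?_, fun y h => ?_⟩⟩
  · have h0 : Nat.find (hex x) ≠ 0 := by
      intro h0
      have := Nat.find_spec (hex x)
      rw [h0] at this
      simp at this
      linarith
    obtain ⟨m, hm⟩ := Nat.exists_eq_succ_of_ne_zero h0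
    have hmin := not_le.1 (Nat.find_min (hex x) (show m < Nat.find (hex x) by omega))
    simp only [hm]
    rw [Finset.prod_range_succ, mul_comm c r]
    exact mul_lt_mul hmin (hcl _) hc (prefixProd_pos (fun i => (hlam i).1) x m).le
  · exact le_antisymm (hle x y h) (hle y x fun j h1 h2 => (h j h2 h1).symm)

/-- Any set of sequences whose codings lie within distance `r` of each other is covered by boundedly
many stopping-time cylinders centred in the set. -/
lemma exists_cover [NeZero N] (hlam : ∀ i, lam i ∈ Set.Ioo (0 : ℝ) 1)
    (hf : ∀ i x y, dist (f i x) (f i y) = lam i * dist x y)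
    {U : Set (EuclideanSpace ℝ (Fin d))} (hUne : U.Nonempty) (hUo : IsOpen U)
    (hUsub : ∀ i, f i '' U ⊆ U)
    (hUdisj : Pairwise fun i j => Disjoint (f i '' U) (f j '' U))
    (hπ : ∀ x, Tendsto (fun n => prefixMap f x n 0) atTop (𝓝 (π x)))
    {Λ : Set (EuclideanSpace ℝ (Fin d))} (hΛb : Bornology.IsBounded Λ) (hπΛ : ∀ x, π x ∈ Λ) :
    ∃ K : ℕ, ∀ (A : Set (ℕ → Fin N)) (r : ℝ), 0 < r → r < 1 →
      (∀ x ∈ A, ∀ y ∈ A, dist (π x) (π y) ≤ r) →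
      ∃ (T : Finset (ℕ → Fin N)) (n : (ℕ → Fin N) → ℕ), T.card ≤ K ∧ ↑T ⊆ A ∧
        (∀ x, ∏ j ∈ Finset.range (n x), lam (x j) ≤ r) ∧
        ∀ x ∈ A, ∃ y ∈ T, ∀ j < n y, x j = y j := by
  classical
  obtain ⟨c, M, hc0, hc1, -, -, hcM⟩ := exists_lam_bounds hlam
  obtain ⟨x0, hx0⟩ := hUne
  obtain ⟨ρ, hρ, hball⟩ := Metric.isOpen_iff.1 hUo x0 hx0
  obtain ⟨C, hC0, hC⟩ := hΛb.subset_closedBall_lt 0 x0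
  refine ⟨⌊((C + 1 + ρ) / (c * ρ)) ^ d⌋₊, fun A r hr0 hr1 hA => ?_⟩
  have hpos : ∀ i, 0 < lam i := fun i => (hlam i).1
  obtain ⟨n, hn⟩ := exists_stopping hlam hc0 (fun i => (hcM i).1) hr0 hr1
  -- finite families of pairwise incomparable stopped words have bounded cardinality
  let Sep : Finset (ℕ → Fin N) → Prop := fun T => ↑T ⊆ A ∧
    ∀ x ∈ T, ∀ y ∈ T, x ≠ y → ∃ j, j < n x ∧ j < n y ∧ x j ≠ y j
  have hbound : ∀ T, Sep T → T.card ≤ ⌊((C + 1 + ρ) / (c * ρ)) ^ d⌋₊ := by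
    rintro T ⟨hTA, hT⟩
    rcases T.eq_empty_or_nonempty with rfl | ⟨x1, hx1⟩
    · simp
    refine Nat.le_floor ?_
    have hin : ∀ x, Metric.ball (prefixMap f x (n x) x0) (c * ρ * r) ⊆
        prefixMap f x (n x) '' U := fun x =>
      ((Metric.ball_subset_ball (by nlinarith [(hn x).2.1])).trans
        (ball_subset_image hpos hf x (n x) x0 ρ)).trans (image_mono hball)
    have := card_le_of_disjoint_balls T (fun x => prefixMap f x (n x) x0) (π x1)
      (ρ := c * ρ * r) (R := (C + 1 + ρ) * r) (by positivity) (by positivity) ?_ ?_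
    · rwa [mul_div_mul_right _ _ hr0.ne'] at this
    · intro x hx y hy hxy
      obtain ⟨j, h1, h2, h3⟩ := hT x hx y hy hxy
      exact (disjoint_prefixMap hpos hf hUsub hUdisj j x y _ _ h1 h2 h3).mono (hin x) (hin y)
    · intro x hx y hy
      rw [Metric.mem_ball] at hy ⊢
      have h1 : dist (prefixMap f x (n x) x0) (π x) ≤ r * C := by
        rw [coding_eq hf hπ x (n x), dist_prefixMap hf]
        refine mul_le_mul (hn x).1 ?_ dist_nonneg hr0.le
        rw [dist_comm]
        exact hC (hπΛ _)
      have h2 := hA x (hTA hx) x1 (hTA hx1)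
      have h3 := dist_triangle4 y (prefixMap f x (n x) x0) (π x) (π x1)
      have h4 : c * ρ * r ≤ ρ * r := by
        have : 0 < ρ * r := by positivity
        nlinarith
      linarith
  -- a separated family of maximal cardinality
  obtain ⟨T, hT, hmax⟩ : ∃ T, Sep T ∧ ∀ T', Sep T' → T'.card ≤ T.card := by
    have hfin : (Finset.card '' {T | Sep T}).Finite :=
      (Set.finite_le_nat _).subset (by rintro _ ⟨T, hT, rfl⟩; exact hbound T hT)
    have hne : (Finset.card '' {T | Sep T}).Nonempty := ⟨_, ∅, by simp [Sep], rfl⟩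
    obtain ⟨_, ⟨T, hT, rfl⟩, hm⟩ := hfin.exists_maximal hne
    refine ⟨T, hT, fun T' hT' => ?_⟩
    rcases le_total T'.card T.card with h | h
    · exact h
    · exact hm ⟨T', hT', rfl⟩ h
  refine ⟨T, n, hbound T hT, hT.1, fun x => (hn x).1, fun x hx => ?_⟩
  by_contra hno
  push Not at hno
  have hxT : x ∉ T := fun h => by
    obtain ⟨j, _, h2⟩ := hno x h
    exact h2 rfl
  have hnew : ∀ y ∈ T, ∃ j, j < n x ∧ j < n y ∧ x j ≠ y j := by
    intro y hy
    by_contra hcon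
    push Not at hcon
    have heq := (hn x).2.2 y hcon
    obtain ⟨j, h1, h2⟩ := hno y hy
    exact h2 (hcon j (heq ▸ h1) h1)
  have := hmax (insert x T) ⟨?_, ?_⟩
  · rw [Finset.card_insert_of_notMem hxT] at this; omega
  · rw [Finset.coe_insert]; exact insert_subset hx hT.1
  · intro y hy z hz hyz
    rcases Finset.mem_insert.1 hy with hyx | hyT
    · rcases Finset.mem_insert.1 hz with hzx | hzT
      · exact absurd (hyx.trans hzx.symm) hyz
      · rw [hyx]; exact hnew z hzT
    · rcases Finset.mem_insert.1 hz with hzx | hzT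
      · obtain ⟨j, h1, h2, h3⟩ := hnew y hyT
        rw [hzx]; exact ⟨j, h2, h1, h3.symm⟩
      · exact hT.2 y hyT z hzT hyz

/-- Mass distribution principle: if the cylinder masses of `ν` are at most the `s`-th power of
their contraction ratios along sequences in `G`, and `ν G > 0`, then `π '' G` has positive
`s`-dimensional Hausdorff measure. -/
lemma hausdorffMeasure_image_ne_zero [NeZero N] (hlam : ∀ i, lam i ∈ Set.Ioo (0 : ℝ) 1)
    (hf : ∀ i x y, dist (f i x) (f i y) = lam i * dist x y)
    {U : Set (EuclideanSpace ℝ (Fin d))} (hUne : U.Nonempty) (hUo : IsOpen U)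
    (hUsub : ∀ i, f i '' U ⊆ U)
    (hUdisj : Pairwise fun i j => Disjoint (f i '' U) (f j '' U))
    (hπ : ∀ x, Tendsto (fun n => prefixMap f x n 0) atTop (𝓝 (π x)))
    {Λ : Set (EuclideanSpace ℝ (Fin d))} (hΛb : Bornology.IsBounded Λ) (hπΛ : ∀ x, π x ∈ Λ)
    {b : Fin N → ℝ} {ν : Measure (ℕ → Fin N)}
    (hν : ∀ (m : ℕ) (w : Fin m → Fin N), ν (_root_.cylinder w) = ENNReal.ofReal (wordProd b w))
    {s : ℝ} (hs : 0 < s) {G : Set (ℕ → Fin N)} (hG : MeasurableSet G) (n0 : ℕ)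
    (hGb : ∀ x ∈ G, ∀ n ≥ n0,
      ∏ j ∈ Finset.range n, b (x j) ≤ (∏ j ∈ Finset.range n, lam (x j)) ^ s)
    (hνG : ν G ≠ 0) : μH[s] (π '' G) ≠ 0 := by
  obtain ⟨c, M, hc0, hc1, -, -, hcM⟩ := exists_lam_bounds hlam
  obtain ⟨K, hK⟩ := exists_cover hlam hf hUne hUo hUsub hUdisj hπ hΛb hπΛ
  have hπm := measurable_coding hf hπ
  have hpos : ∀ i, 0 < lam i := fun i => (hlam i).1
  let m := (ν.restrict G).map π
  have hball : ∀ (S : Set (EuclideanSpace ℝ (Fin d))) (r : ℝ), 0 < r → r < c ^ n0 →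
      Metric.ediam S ≤ ENNReal.ofReal r → m S ≤ ((K + 1 : ℕ) : ℝ≥0∞) * ENNReal.ofReal r ^ s := by
    intro S r hr0 hr1 hS
    obtain ⟨T, n, hTK, hTA, hnr, hcov⟩ := hK (π ⁻¹' closure S ∩ G) r hr0
      (hr1.trans_le (pow_le_one₀ hc0.le hc1.le)) (by
        intro x hx y hy
        have h1 := Metric.edist_le_ediam_of_mem (s := closure S)
          (show π x ∈ closure S from hx.1) (show π y ∈ closure S from hy.1)
        rw [Metric.ediam_closure] at h1
        exact (edist_le_ofReal hr0.le).1 (h1.trans hS))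
    calc m S ≤ m (closure S) := measure_mono subset_closure
      _ = ν (π ⁻¹' closure S ∩ G) := by
        rw [Measure.map_apply hπm isClosed_closure.measurableSet, Measure.restrict_apply' hG]
      _ ≤ ν (⋃ y ∈ T, _root_.cylinder fun j : Fin (n y) => y j) := by
        refine measure_mono fun x hx => ?_
        obtain ⟨y, hy, h⟩ := hcov x hx
        exact mem_iUnion₂.2 ⟨y, hy, fun j => h j j.2⟩
      _ ≤ ∑ y ∈ T, ν (_root_.cylinder fun j : Fin (n y) => y j) := measure_biUnion_finset_le _ _
      _ ≤ ∑ y ∈ T, ENNReal.ofReal r ^ s := by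
        refine Finset.sum_le_sum fun y hy => ?_
        have hn0 : n0 ≤ n y := by
          by_contra hlt
          have h1 := le_prefixProd hc0 (fun i => (hcM i).1) y (n y)
          have h2 : c ^ n0 ≤ c ^ n y := pow_le_pow_of_le_one hc0.le hc1.le (by omega)
          linarith [hnr y]
        rw [hν, ENNReal.ofReal_rpow_of_pos hr0]
        refine ENNReal.ofReal_le_ofReal ?_
        have h1 := hGb y (hTA hy).2 (n y) hn0
        rw [Finset.prod_range] at h1
        exact h1.trans (Real.rpow_le_rpow (prefixProd_pos hpos y _).le (hnr y) hs.le)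
      _ = (T.card : ℝ≥0∞) * ENNReal.ofReal r ^ s := by rw [Finset.sum_const, nsmul_eq_mul]
      _ ≤ _ := by
        refine mul_le_mul_left ?_ _
        exact_mod_cast hTK.trans (Nat.le_succ K)
  have hKne : ((K + 1 : ℕ) : ℝ≥0∞) ≠ 0 := by exact_mod_cast Nat.succ_ne_zero K
  have hKtop : ((K + 1 : ℕ) : ℝ≥0∞) ≠ ∞ := ENNReal.natCast_ne_top _
  have hle : ((K + 1 : ℕ) : ℝ≥0∞)⁻¹ • m ≤ μH[s] := by
    have hcn : 0 < c ^ n0 := pow_pos hc0 _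
    refine Measure.le_hausdorffMeasure s _ (ENNReal.ofReal (c ^ n0 / 2))
      (ENNReal.ofReal_pos.2 (by positivity)) fun S hS => ?_
    rw [Measure.smul_apply, smul_eq_mul, ENNReal.inv_mul_le_iff hKne hKtop]
    have hSt : Metric.ediam S ≠ ∞ := (hS.trans_lt ENNReal.ofReal_lt_top).ne
    have hSr : (Metric.ediam S).toReal ≤ c ^ n0 / 2 :=
      ENNReal.toReal_le_of_le_ofReal (by positivity) hS
    -- let `r` decrease to the diameter, which may be zero
    have hlim : Tendsto (fun r : ℝ => ((K + 1 : ℕ) : ℝ≥0∞) * ENNReal.ofReal r ^ s)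
        (𝓝[>] (Metric.ediam S).toReal) (𝓝 (((K + 1 : ℕ) : ℝ≥0∞) * Metric.ediam S ^ s)) := by
      refine ENNReal.Tendsto.const_mul ?_ (Or.inr hKtop)
      have h1 : Tendsto (fun r : ℝ => ENNReal.ofReal r ^ s) (𝓝 (Metric.ediam S).toReal)
          (𝓝 (ENNReal.ofReal (Metric.ediam S).toReal ^ s)) :=
        ((ENNReal.continuous_rpow_const (y := s)).comp ENNReal.continuous_ofReal).tendsto _
      rw [ENNReal.ofReal_toReal hSt] at h1
      exact h1.mono_left nhdsWithin_le_nhds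
    refine ge_of_tendsto hlim ?_
    filter_upwards [Ioo_mem_nhdsGT (show (Metric.ediam S).toReal < c ^ n0 by linarith)]
      with r hr
    refine hball S r (ENNReal.toReal_nonneg.trans_lt hr.1) hr.2 ?_
    rw [← ENNReal.ofReal_toReal hSt]
    exact ENNReal.ofReal_le_ofReal hr.1.le
  intro h0
  have h1 : (((K + 1 : ℕ) : ℝ≥0∞)⁻¹ • m) (π '' G) ≤ 0 := h0 ▸ hle (π '' G)
  rw [Measure.smul_apply, smul_eq_mul, nonpos_iff_eq_zero, mul_eq_zero] at h1
  have h2 := h1.resolve_left (ENNReal.inv_ne_zero.2 hKtop)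
  refine hνG (le_antisymm ?_ zero_le)
  calc ν G ≤ (ν.restrict G) (π ⁻¹' (π '' G)) := by
        rw [Measure.restrict_apply' hG]
        exact measure_mono fun x hx => ⟨mem_image_of_mem _ hx, hx⟩
    _ ≤ m (π '' G) := Measure.le_map_apply hπm.aemeasurable _
    _ = 0 := h2

end Mass

/-! ### Growth of the word lengths -/

/-- The two halves of `liminf ℓ(n) / log n = 1/α`. As `1/α ≠ 0`, the liminf is not a junk value. -/
lemma liminf_bounds {α : ℝ} (hα : 0 < α) {ℓ : ℕ → ℕ}
    (hℓ : Filter.liminf (fun n : ℕ => (ℓ n : ℝ) / Real.log n) Filter.atTop = 1 / α) :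
    (∀ β > α, ∀ᶠ n : ℕ in atTop, (n : ℝ) ≤ Real.exp (β * ℓ n)) ∧
    (∀ β, 0 < β → β < α → ∃ᶠ n : ℕ in atTop, Real.exp (β * ℓ n) < n) := by
  rw [Filter.liminf_eq] at hℓ
  have hpos : (0 : ℝ) < 1 / α := by positivity
  have hne : {a : ℝ | ∀ᶠ n : ℕ in atTop, a ≤ (ℓ n : ℝ) / Real.log n}.Nonempty := by
    by_contra h
    rw [not_nonempty_iff_eq_empty.1 h, Real.sSup_empty] at hℓ
    linarith
  have hbdd : BddAbove {a : ℝ | ∀ᶠ n : ℕ in atTop, a ≤ (ℓ n : ℝ) / Real.log n} := by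
    by_contra h
    rw [Real.sSup_of_not_bddAbove h] at hℓ
    linarith
  have hlog : ∀ᶠ n : ℕ in atTop, 0 < Real.log n := by
    filter_upwards [eventually_gt_atTop 1] with n hn
    exact Real.log_pos (by exact_mod_cast hn)
  refine ⟨fun β hβ => ?_, fun β hβ0 hβ => ?_⟩
  · have hlt : 1 / β < 1 / α := one_div_lt_one_div_of_lt hα hβ
    have hβ0 : 0 < β := hα.trans hβ
    rw [← hℓ] at hlt
    obtain ⟨a, ha, hlta⟩ := exists_lt_of_lt_csSup hne hlt
    filter_upwards [ha, hlog, eventually_gt_atTop 0] with n h1 h2 h3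
    have h4 := hlta.le.trans h1
    rw [div_le_div_iff₀ hβ0 h2] at h4
    have h5 : (0 : ℝ) < n := by exact_mod_cast h3
    rw [← Real.log_le_iff_le_exp h5]
    linarith
  · have hlt : 1 / α < 1 / β := one_div_lt_one_div_of_lt hβ0 hβ
    have hnot : ¬ ∀ᶠ n : ℕ in atTop, 1 / β ≤ (ℓ n : ℝ) / Real.log n := by
      intro h
      have := le_csSup hbdd h
      linarith
    rw [not_eventually] at hnot
    refine (hnot.and_eventually (hlog.and (eventually_gt_atTop 0))).mono ?_
    rintro n ⟨h1, h2, h3⟩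
    rw [not_le, div_lt_div_iff₀ h2 hβ0] at h1
    have h5 : (0 : ℝ) < n := by exact_mod_cast h3
    rw [← Real.lt_log_iff_exp_lt h5]
    linarith

lemma tendsto_length {α : ℝ} (hα : 0 < α) {ℓ : ℕ → ℕ}
    (hℓ : Filter.liminf (fun n : ℕ => (ℓ n : ℝ) / Real.log n) Filter.atTop = 1 / α) :
    Tendsto ℓ atTop atTop := by
  refine tendsto_atTop.2 fun L => ?_
  have h1 := (liminf_bounds hα hℓ).1 (α + 1) (by linarith)
  have h2 : ∀ᶠ n : ℕ in atTop, Real.exp ((α + 1) * L) < n :=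
    tendsto_natCast_atTop_atTop.eventually_gt_atTop _
  filter_upwards [h1, h2] with n h3 h4
  have h5 := Real.exp_lt_exp.1 (h4.trans_le h3)
  have h6 : (L : ℝ) < ℓ n := lt_of_mul_lt_mul_left h5 (by linarith)
  exact_mod_cast h6.le

/-! ### Lower bound -/

/-- Almost surely, for all large `L`, every word of length `L` with `p`-mass at least `e^{-βL}`
occurs at one of the positions `L, 2L, …` up to `e^{γL}`, provided `β < γ`: the failure probability
is superexponentially small. -/
lemma ae_all_likely_words_occur {N : ℕ} [NeZero N] {p : Fin N → ℝ} (hp : ∀ i, 0 < p i)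
    (hpsum : ∑ i, p i = 1) {μ : Measure (ℕ → Fin N)} [IsProbabilityMeasure μ]
    (hμ : ∀ (m : ℕ) (w : Fin m → Fin N), μ (_root_.cylinder w) = ENNReal.ofReal (wordProd p w))
    {β γ : ℝ} (hβ : 0 < β) (hβγ : β < γ) :
    ∀ᵐ o ∂μ, ∀ᶠ L : ℕ in atTop, ∀ w : Fin L → Fin N, Real.exp (-(β * L)) ≤ wordProd p w →
      ∃ k < ⌊Real.exp (γ * L) / L⌋₊, (fun j : Fin L => o ((k + 1) * L + j)) = w := by
  have hN0 : (0 : ℝ) < N := by exact_mod_cast Nat.pos_of_ne_zero (NeZero.ne N)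
  have hgrow : ∀ᶠ L : ℕ in atTop,
      Real.log N + 2 ≤ Real.exp ((γ - β) * L) / (L : ℝ) ^ (2 : ℝ) :=
    (tendsto_exp_mul_div_rpow_atTop 2 (γ - β) (by linarith)).comp tendsto_natCast_atTop_atTop
      |>.eventually_ge_atTop _
  obtain ⟨L0, hL0⟩ := eventually_atTop.1 (hgrow.and (eventually_ge_atTop 1))
  let B : ℕ → Set (ℕ → Fin N) := fun L => {o | L0 ≤ L ∧ ∃ w : Fin L → Fin N,
    Real.exp (-(β * L)) ≤ wordProd p w ∧
      ∀ k < ⌊Real.exp (γ * L) / L⌋₊, (fun j : Fin L => o ((k + 1) * L + j)) ≠ w}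
  have hB : ∀ L, μ (B L) ≤ ENNReal.ofReal (Real.exp (-1) ^ L) := by
    intro L
    by_cases hL : L0 ≤ L
    swap
    · have : B L = ∅ := by ext o; simp [B, hL]
      simp [this]
    obtain ⟨h1, h2⟩ := hL0 L hL
    have hLpos : (1 : ℝ) ≤ L := by exact_mod_cast h2
    set K := ⌊Real.exp (γ * L) / L⌋₊ with hK
    classical
    have hword : ∀ w : Fin L → Fin N, Real.exp (-(β * L)) ≤ wordProd p w →
        (1 - wordProd p w) ^ K ≤ Real.exp (-((Real.log N + 1) * L)) := by
      intro w hw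
      have hw1 : wordProd p w ≤ 1 := by
        have := Finset.single_le_sum (f := fun w : Fin L → Fin N => wordProd p w)
          (fun v _ => (wordProd_pos hp v).le) (Finset.mem_univ w)
        simpa [sum_wordProd, hpsum] using this
      have hexp : 1 - wordProd p w ≤ Real.exp (-wordProd p w) := by
        have := Real.add_one_le_exp (-wordProd p w); linarith
      refine (pow_le_pow_left₀ (by linarith) hexp K).trans ?_
      rw [← Real.exp_nat_mul]
      refine Real.exp_le_exp.2 ?_
      have hKlow : Real.exp (γ * L) / L - 1 ≤ K := by
        have := Nat.lt_floor_add_one (Real.exp (γ * L) / L)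
        rw [← hK] at this; linarith
      have hprod : Real.exp (-(β * L)) * (Real.exp (γ * L) / L - 1) ≤ K * wordProd p w := by
        rw [mul_comm (K : ℝ)]
        calc Real.exp (-(β * L)) * (Real.exp (γ * L) / L - 1)
            ≤ Real.exp (-(β * L)) * K := mul_le_mul_of_nonneg_left hKlow (Real.exp_pos _).le
          _ ≤ _ := mul_le_mul_of_nonneg_right hw (Nat.cast_nonneg _)
      have hsplit : Real.exp (-(β * L)) * (Real.exp (γ * L) / L - 1) =
          Real.exp ((γ - β) * L) / L - Real.exp (-(β * L)) := by
        rw [mul_sub, ← mul_div_assoc, ← Real.exp_add, mul_one]; congr 3; ring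
      have hsmall : Real.exp (-(β * L)) ≤ 1 := Real.exp_le_one_iff.2 (by nlinarith)
      have hbig : (Real.log N + 2) * L ≤ Real.exp ((γ - β) * L) / L := by
        rw [Real.rpow_two, le_div_iff₀ (by positivity)] at h1
        rw [le_div_iff₀ (by positivity)]
        nlinarith
      nlinarith
    have hsub : B L ⊆ ⋃ w ∈ (Finset.univ.filter fun w : Fin L → Fin N =>
        Real.exp (-(β * L)) ≤ wordProd p w),
        {o | ∀ k < K, (fun j : Fin L => o ((k + 1) * L + j)) ≠ w} := by
      rintro o ⟨-, w, hw, h⟩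
      exact mem_iUnion₂.2 ⟨w, by simpa using hw, h⟩
    calc μ (B L) ≤ _ := measure_mono hsub
      _ ≤ ∑ w ∈ (Finset.univ.filter fun w : Fin L → Fin N =>
          Real.exp (-(β * L)) ≤ wordProd p w),
          μ {o | ∀ k < K, (fun j : Fin L => o ((k + 1) * L + j)) ≠ w} :=
        measure_biUnion_finset_le _ _
      _ ≤ ∑ w ∈ (Finset.univ.filter fun w : Fin L → Fin N =>
          Real.exp (-(β * L)) ≤ wordProd p w),
          ENNReal.ofReal (Real.exp (-((Real.log N + 1) * L))) := by
        refine Finset.sum_le_sum fun w hw => ?_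
        rw [measure_avoid hp hpsum hμ]
        exact ENNReal.ofReal_le_ofReal (hword w (Finset.mem_filter.1 hw).2)
      _ ≤ ∑ w : Fin L → Fin N, ENNReal.ofReal (Real.exp (-((Real.log N + 1) * L))) :=
        Finset.sum_le_sum_of_subset (Finset.filter_subset _ _)
      _ = ENNReal.ofReal ((N : ℝ) ^ L * Real.exp (-((Real.log N + 1) * L))) := by
        rw [Finset.sum_const, nsmul_eq_mul, Finset.card_univ, Fintype.card_fun, Fintype.card_fin,
          Fintype.card_fin, ENNReal.ofReal_mul (by positivity), ← Nat.cast_pow,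
          ENNReal.ofReal_natCast]
      _ = _ := by
        congr 1
        nth_rw 1 [← Real.exp_log hN0]
        rw [← Real.exp_nat_mul, ← Real.exp_nat_mul, ← Real.exp_add]
        congr 1; ring
  have hsum : ∑' L, μ (B L) ≠ ∞ := by
    refine ne_top_of_le_ne_top ?_ (ENNReal.tsum_le_tsum hB)
    rw [← ENNReal.ofReal_tsum_of_nonneg (fun L => by positivity)
      (summable_geometric_of_lt_one (Real.exp_pos _).le (Real.exp_lt_one_iff.2 (by norm_num)))]
    exact ENNReal.ofReal_ne_top
  filter_upwards [ae_eventually_notMem hsum] with o ho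
  filter_upwards [ho, eventually_ge_atTop L0] with L hL hLL w hw
  by_contra hcon
  push Not at hcon
  exact hL ⟨hLL, w, hw, hcon⟩

/-- A sequence all of whose long prefixes are likely belongs to the limsup set, once all likely
words occur in `o` early enough. -/
lemma mem_limsupCylinders {N : ℕ} {p : Fin N → ℝ} {ℓ : ℕ → ℕ} (hℓmono : Monotone ℓ)
    (hℓtop : Tendsto ℓ atTop atTop) {β γ : ℝ}
    (hfreq : ∃ᶠ n : ℕ in atTop, Real.exp (γ * ℓ n) < n) {o x : ℕ → Fin N}
    (ho : ∀ᶠ L : ℕ in atTop, ∀ w : Fin L → Fin N, Real.exp (-(β * L)) ≤ wordProd p w →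
      ∃ k < ⌊Real.exp (γ * L) / L⌋₊, (fun j : Fin L => o ((k + 1) * L + j)) = w)
    (hx : ∀ᶠ n : ℕ in atTop, Real.exp (-(β * n)) ≤ wordProd p fun j : Fin n => x j) :
    x ∈ limsupCylinders ℓ o := by
  refine mem_iInter.2 fun k0 => ?_
  obtain ⟨n, hn, h1, h2, h3, h4⟩ := (hfreq.and_eventually
    ((hℓtop.eventually ho).and ((hℓtop.eventually hx).and
      ((hℓtop.eventually (eventually_ge_atTop k0)).and
        (hℓtop.eventually (eventually_gt_atTop 0)))))).exists
  obtain ⟨k, hk, hkw⟩ := h1 _ h2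
  have hLpos : (0 : ℝ) < ℓ n := by exact_mod_cast h4
  have hle : (k + 1) * ℓ n ≤ n := by
    have h5 : ((k + 1 : ℕ) : ℝ) ≤ Real.exp (γ * ℓ n) / ℓ n :=
      (Nat.le_floor_iff (by positivity)).1 hk
    rw [le_div_iff₀ hLpos] at h5
    have h6 := h5.trans_lt hn
    exact_mod_cast h6.le
  refine mem_iUnion₂.2 ⟨(k + 1) * ℓ n, h3.trans (Nat.le_mul_of_pos_left _ (Nat.succ_pos k)), ?_⟩
  intro j
  exact (congrFun hkw ⟨j, j.2.trans_le (hℓmono hle)⟩).symm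

/-- The coded limsup set almost surely has dimension at least `s` whenever some Bernoulli measure,
with weights `b`, has entropy/Lyapunov quotient above `s` (`hbs`) and typical words of length `L`
with `p`-mass well above `e^{-αL}` (`hbv`). -/
lemma ae_le_dimH {N d : ℕ} [NeZero N] {lam p : Fin N → ℝ}
    (hlam : ∀ i, lam i ∈ Set.Ioo (0 : ℝ) 1) (hp : ∀ i, 0 < p i) (hpsum : ∑ i, p i = 1)
    {f : Fin N → EuclideanSpace ℝ (Fin d) → EuclideanSpace ℝ (Fin d)}
    (hf : ∀ i x y, dist (f i x) (f i y) = lam i * dist x y)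
    {Λ : Set (EuclideanSpace ℝ (Fin d))} (hΛb : Bornology.IsBounded Λ)
    {U : Set (EuclideanSpace ℝ (Fin d))} (hUne : U.Nonempty) (hUo : IsOpen U)
    (hUsub : ∀ i, f i '' U ⊆ U)
    (hUdisj : Pairwise fun i j => Disjoint (f i '' U) (f j '' U))
    {π : (ℕ → Fin N) → EuclideanSpace ℝ (Fin d)}
    (hπ : ∀ x, Tendsto (fun n => prefixMap f x n 0) atTop (𝓝 (π x)))
    (hπΛ : ∀ x, π x ∈ Λ)
    {μ : Measure (ℕ → Fin N)} [IsProbabilityMeasure μ]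
    (hμ : ∀ (m : ℕ) (w : Fin m → Fin N), μ (_root_.cylinder w) = ENNReal.ofReal (wordProd p w))
    {α : ℝ} (hα : 0 < α) {ℓ : ℕ → ℕ} (hℓmono : Monotone ℓ)
    (hℓ : Filter.liminf (fun n : ℕ => (ℓ n : ℝ) / Real.log n) Filter.atTop = 1 / α)
    {b : Fin N → ℝ} (hb : ∀ i, 0 < b i) (hbsum : ∑ i, b i = 1)
    (hbv : 0 < ∑ i, b i * (Real.log (p i) + α)) {s : ℝ} (hs : 0 < s)
    (hbs : ∑ i, b i * (Real.log (b i) - s * Real.log (lam i)) < 0) :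
    ∀ᵐ o ∂μ, ENNReal.ofReal s ≤ dimH (π '' limsupCylinders ℓ o) := by
  obtain ⟨ε, hε, hε1, hε2⟩ : ∃ ε > 0, 2 * ε < α ∧
      2 * ε < ∑ i, b i * (Real.log (p i) + α) := by
    refine ⟨min α (∑ i, b i * (Real.log (p i) + α)) / 4, by positivity, ?_, ?_⟩
    · linarith [min_le_left α (∑ i, b i * (Real.log (p i) + α))]
    · linarith [min_le_right α (∑ i, b i * (Real.log (p i) + α))]
  obtain ⟨ν, hνp, hν, hlln⟩ := exists_bernoulli b hb hbsum
  have h1 := hlln _ hbs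
  have h2 := hlln (fun i => -(Real.log (p i) + (α - 2 * ε))) (by
    have : ∑ i, b i * -(Real.log (p i) + (α - 2 * ε))
        = -(∑ i, b i * (Real.log (p i) + α)) + 2 * ε * ∑ i, b i := by
      rw [Finset.mul_sum, ← Finset.sum_neg_distrib, ← Finset.sum_add_distrib]
      exact Finset.sum_congr rfl fun i _ => by ring
    rw [this, hbsum]; linarith)
  let G : ℕ → Set (ℕ → Fin N) := fun n0 => {x | ∀ n ≥ n0,
    ∑ j ∈ Finset.range n, (Real.log (b (x j)) - s * Real.log (lam (x j))) < 0 ∧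
    ∑ j ∈ Finset.range n, -(Real.log (p (x j)) + (α - 2 * ε)) < 0}
  have hsummeas : ∀ (φ : Fin N → ℝ) (n : ℕ),
      Measurable fun x : ℕ → Fin N => ∑ j ∈ Finset.range n, φ (x j) := fun φ n =>
    Finset.measurable_sum _ fun j _ => (measurable_from_top (f := φ)).comp (measurable_pi_apply j)
  have hGm : ∀ n0, MeasurableSet (G n0) := by
    intro n0
    have : G n0 = ⋂ n, ⋂ _ : n ≥ n0,
        ({x | ∑ j ∈ Finset.range n, (Real.log (b (x j)) - s * Real.log (lam (x j))) < 0} ∩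
        {x | ∑ j ∈ Finset.range n, -(Real.log (p (x j)) + (α - 2 * ε)) < 0}) := by
      ext x; simp [G]
    rw [this]
    exact MeasurableSet.iInter fun n => MeasurableSet.iInter fun _ =>
      (measurableSet_lt (hsummeas (fun i => Real.log (b i) - s * Real.log (lam i)) n)
        measurable_const).inter
      (measurableSet_lt (hsummeas (fun i => -(Real.log (p i) + (α - 2 * ε))) n) measurable_const)
  obtain ⟨n0, hn0⟩ : ∃ n0, ν (G n0) ≠ 0 := by
    by_contra! hcon
    have hU : ν (⋃ n, G n) = 0 := measure_iUnion_null hcon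
    have hfull : ∀ᵐ x ∂ν, x ∈ ⋃ n, G n := by
      filter_upwards [h1, h2] with x hx1 hx2
      obtain ⟨n, hn⟩ := eventually_atTop.1 (hx1.and hx2)
      exact mem_iUnion.2 ⟨n, hn⟩
    have h3 := prob_compl_eq_zero_iff₀ (μ := ν)
      (MeasurableSet.iUnion hGm).nullMeasurableSet |>.1 hfull
    rw [hU] at h3
    exact zero_ne_one h3
  have hpos : μH[s] (π '' G n0) ≠ 0 := by
    refine hausdorffMeasure_image_ne_zero hlam hf hUne hUo hUsub hUdisj hπ hΛb hπΛ hν hs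
      (hGm n0) n0 ?_ hn0
    intro x hx n hn
    have h := (hx n hn).1
    have hbp : 0 < ∏ j ∈ Finset.range n, b (x j) := Finset.prod_pos fun _ _ => hb _
    have hlp : 0 < ∏ j ∈ Finset.range n, lam (x j) := Finset.prod_pos fun _ _ => (hlam _).1
    rw [← Real.log_le_log_iff hbp (Real.rpow_pos_of_pos hlp s), Real.log_rpow hlp,
      Real.log_prod fun j _ => (hb _).ne', Real.log_prod fun j _ => (hlam _).1.ne',
      Finset.mul_sum]
    rw [Finset.sum_sub_distrib] at h
    linarith
  have hfreq := (liminf_bounds hα hℓ).2 (α - ε) (by linarith) (by linarith)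
  filter_upwards [ae_all_likely_words_occur hp hpsum hμ (β := α - 2 * ε) (γ := α - ε)
    (by linarith) (by linarith)] with o ho
  have hsub : G n0 ⊆ limsupCylinders ℓ o := by
    intro x hx
    refine mem_limsupCylinders hℓmono (tendsto_length hα hℓ) hfreq ho ?_
    filter_upwards [eventually_ge_atTop n0] with n hn
    have h := (hx n hn).2
    have hwp : 0 < wordProd p fun j : Fin n => x j := wordProd_pos hp _
    rw [← Real.le_log_iff_exp_le hwp, wordProd, Real.log_prod fun j _ => (hp _).ne',
      ← Finset.sum_range fun j => Real.log (p (x j))]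
    rw [Finset.sum_neg_distrib, Finset.sum_add_distrib, Finset.sum_const, Finset.card_range,
      nsmul_eq_mul] at h
    linarith
  have := le_dimH_of_hausdorffMeasure_ne_zero (d := s.toNNReal) (s := π '' limsupCylinders ℓ o) (by
    rw [Real.coe_toNNReal s hs.le]
    exact fun h => hpos (measure_mono_null (image_mono hsub) h))
  exact this

/-! ### Upper bound -/

/-- The event that the word `w` occurs in the sequence `o` at a position before `K`. -/
def occurs {N L : ℕ} (K : ℕ) (w : Fin L → Fin N) : Set (ℕ → Fin N) :=
  ⋃ n ∈ Finset.range K, {o | (fun j : Fin L => o (n + j)) = w}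

lemma measurableSet_occurs {N L : ℕ} (K : ℕ) (w : Fin L → Fin N) :
    MeasurableSet (occurs K w) :=
  Finset.measurableSet_biUnion _ fun n _ => measurableSet_prefix n L {w}

/-- Union bound, interpolated with the trivial bound `1` through `min 1 x ≤ x ^ q`. -/
lemma measure_occurs_before_le {N : ℕ} {p : Fin N → ℝ} (hp : ∀ i, 0 < p i)
    (hpsum : ∑ i, p i = 1) {μ : Measure (ℕ → Fin N)} [IsProbabilityMeasure μ]
    (hμ : ∀ (m : ℕ) (w : Fin m → Fin N), μ (_root_.cylinder w) = ENNReal.ofReal (wordProd p w))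
    {q : ℝ} (hq0 : 0 ≤ q) (hq1 : q ≤ 1) (K : ℕ) {L : ℕ} (w : Fin L → Fin N) :
    μ (occurs K w) ≤ ENNReal.ofReal ((K * wordProd p w) ^ q) := by
  have hw := wordProd_pos hp w
  have hx : (0 : ℝ) ≤ K * wordProd p w := by positivity
  rcases le_total (K * wordProd p w) 1 with h | h
  · calc μ (occurs K w) ≤ ∑ n ∈ Finset.range K, μ {o | (fun j : Fin L => o (n + j)) = w} :=
          measure_biUnion_finset_le _ _
      _ = ENNReal.ofReal (K * wordProd p w) := by
          simp_rw [measure_occurs hp hpsum hμ]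
          rw [Finset.sum_const, Finset.card_range, nsmul_eq_mul, ENNReal.ofReal_mul (by positivity),
            ENNReal.ofReal_natCast]
      _ ≤ _ := ENNReal.ofReal_le_ofReal (by
          rcases hx.eq_or_lt with h0 | h0
          · rw [← h0]; positivity
          · simpa using Real.rpow_le_rpow_of_exponent_ge h0 h hq1)
  · calc μ (occurs K w) ≤ 1 := prob_le_one
      _ ≤ _ := by
          rw [← ENNReal.ofReal_one]
          exact ENNReal.ofReal_le_ofReal (Real.one_le_rpow h hq0)

lemma wordProd_rpow_mul {N : ℕ} {lam p : Fin N → ℝ} (hlam : ∀ i, 0 < lam i)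
    (hp : ∀ i, 0 < p i) (s q β : ℝ) {L : ℕ} (w : Fin L → Fin N) :
    wordProd (fun i => lam i ^ s * (p i * Real.exp β) ^ q) w =
      wordProd lam w ^ s * (wordProd p w * Real.exp (β * L)) ^ q := by
  have h : wordProd p w * Real.exp (β * L) = ∏ j, (p (w j) * Real.exp β) := by
    rw [Finset.prod_mul_distrib, Finset.prod_const, Finset.card_univ, Fintype.card_fin,
      ← Real.exp_nat_mul, mul_comm β, wordProd]
  rw [h]
  simp only [wordProd]
  rw [Finset.prod_mul_distrib, Real.finsetProd_rpow _ _ (fun i _ => (hlam _).le),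
    Real.finsetProd_rpow _ _ (fun i _ => (mul_pos (hp _) (Real.exp_pos _)).le)]

/-- First moment bound: almost surely the words occurring in time have summable weight. -/
lemma ae_tsum_occurs_lt_top {N : ℕ} {lam p : Fin N → ℝ} (hlam : ∀ i, 0 < lam i)
    (hp : ∀ i, 0 < p i)
    (hpsum : ∑ i, p i = 1) {μ : Measure (ℕ → Fin N)} [IsProbabilityMeasure μ]
    (hμ : ∀ (m : ℕ) (w : Fin m → Fin N), μ (_root_.cylinder w) = ENNReal.ofReal (wordProd p w))
    {q s β : ℝ} (hq0 : 0 ≤ q) (hq1 : q ≤ 1) (hβ : 0 ≤ β)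
    (hlt : ∑ i, lam i ^ s * (p i * Real.exp β) ^ q < 1) :
    ∀ᵐ o ∂μ, ∑' x : Σ L : ℕ, (Fin L → Fin N),
      (occurs (⌊Real.exp (β * x.1)⌋₊ + 1) x.2).indicator
        (fun _ => ENNReal.ofReal (wordProd lam x.2 ^ s)) o < ⊤ := by
  set θ := ∑ i, lam i ^ s * (p i * Real.exp β) ^ q with hθ
  have hterm : ∀ i, 0 < lam i ^ s * (p i * Real.exp β) ^ q := fun i =>
    mul_pos (Real.rpow_pos_of_pos (hlam i) _)
      (Real.rpow_pos_of_pos (mul_pos (hp i) (Real.exp_pos _)) _)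
  have hθ0 : 0 ≤ θ := Finset.sum_nonneg fun i _ => (hterm i).le
  have hmeas : ∀ x : Σ L : ℕ, (Fin L → Fin N), Measurable
      ((occurs (⌊Real.exp (β * x.1)⌋₊ + 1) x.2).indicator
        (fun _ => ENNReal.ofReal (wordProd lam x.2 ^ s))) := fun x =>
    measurable_const.indicator (measurableSet_occurs _ _)
  refine ae_lt_top (Measurable.tsum hmeas) ?_
  rw [lintegral_tsum fun x => (hmeas x).aemeasurable]
  have hbound : ∀ x : Σ L : ℕ, (Fin L → Fin N),
      ∫⁻ o, (occurs (⌊Real.exp (β * x.1)⌋₊ + 1) x.2).indicator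
        (fun _ => ENNReal.ofReal (wordProd lam x.2 ^ s)) o ∂μ ≤
      ENNReal.ofReal (2 * wordProd (fun i => lam i ^ s * (p i * Real.exp β) ^ q) x.2) := by
    rintro ⟨L, w⟩
    have hl := wordProd_pos hlam w
    have hw := wordProd_pos hp w
    rw [lintegral_indicator_const (measurableSet_occurs _ _)]
    refine (mul_le_mul_right (measure_occurs_before_le hp hpsum hμ hq0 hq1 _ w) _).trans ?_
    rw [← ENNReal.ofReal_mul (by positivity), wordProd_rpow_mul hlam hp]
    refine ENNReal.ofReal_le_ofReal ?_
    have hK : ((⌊Real.exp (β * L)⌋₊ + 1 : ℕ) : ℝ) ≤ 2 * Real.exp (β * L) := by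
      push_cast
      have h1 := Nat.floor_le (Real.exp_pos (β * L)).le
      have h2 : 1 ≤ Real.exp (β * L) := Real.one_le_exp (by positivity)
      linarith
    have h2 : ((⌊Real.exp (β * L)⌋₊ + 1 : ℕ) * wordProd p w : ℝ) ^ q ≤
        2 * (wordProd p w * Real.exp (β * L)) ^ q := by
      calc _ ≤ (2 * (wordProd p w * Real.exp (β * L))) ^ q := by
            refine Real.rpow_le_rpow (by positivity) ?_ hq0
            nlinarith
        _ = 2 ^ q * (wordProd p w * Real.exp (β * L)) ^ q :=
            Real.mul_rpow (by norm_num) (by positivity)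
        _ ≤ _ := by
            refine mul_le_mul_of_nonneg_right ?_ (by positivity)
            simpa using Real.rpow_le_rpow_of_exponent_le (by norm_num : (1 : ℝ) ≤ 2) hq1
    calc _ ≤ wordProd lam w ^ s * (2 * (wordProd p w * Real.exp (β * L)) ^ q) :=
          mul_le_mul_of_nonneg_left h2 (by positivity)
      _ = _ := by ring
  refine ne_top_of_le_ne_top ?_ (ENNReal.tsum_le_tsum hbound)
  rw [ENNReal.tsum_sigma']
  have hL : ∀ L : ℕ, ∑' w : Fin L → Fin N,
      ENNReal.ofReal (2 * wordProd (fun i => lam i ^ s * (p i * Real.exp β) ^ q) w) =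
      ENNReal.ofReal (2 * θ ^ L) := by
    intro L
    rw [tsum_fintype, ← ENNReal.ofReal_sum_of_nonneg, ← Finset.mul_sum, sum_wordProd]
    exact fun w _ => mul_nonneg (by norm_num) (wordProd_pos hterm w).le
  simp only [hL]
  rw [← ENNReal.ofReal_tsum_of_nonneg (fun L => by positivity)
    ((summable_geometric_of_lt_one hθ0 hlt).mul_left 2)]
  exact ENNReal.ofReal_ne_top

lemma ediam_image_cylinder_le {N d : ℕ} [NeZero N] {lam : Fin N → ℝ}
    (hlam : ∀ i, lam i ∈ Set.Ioo (0 : ℝ) 1)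
    {f : Fin N → EuclideanSpace ℝ (Fin d) → EuclideanSpace ℝ (Fin d)}
    (hf : ∀ i x y, dist (f i x) (f i y) = lam i * dist x y)
    {π : (ℕ → Fin N) → EuclideanSpace ℝ (Fin d)}
    (hπ : ∀ x, Tendsto (fun n => prefixMap f x n 0) atTop (𝓝 (π x)))
    {D : ℝ} (hD : ∀ x y, dist (π x) (π y) ≤ D) {L : ℕ} (w : Fin L → Fin N) :
    Metric.ediam (π '' _root_.cylinder w) ≤ ENNReal.ofReal (wordProd lam w * D) := by
  refine Metric.ediam_le ?_
  rintro _ ⟨x, hx, rfl⟩ _ ⟨y, hy, rfl⟩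
  rw [edist_dist]
  refine ENNReal.ofReal_le_ofReal ?_
  have h := dist_coding_le hlam hf hπ hD (x := x) (y := y) (n := L)
    (fun j hj => (hx ⟨j, hj⟩).trans (hy ⟨j, hj⟩).symm)
  rw [Finset.prod_range] at h
  convert h using 2
  exact Finset.prod_congr rfl fun j _ => by rw [hx j]

/-- The cylinders of the words occurring in time, of length at least `L₀`, form an efficient cover
of the limsup set. -/
lemma ae_dimH_le {N d : ℕ} [NeZero N] {lam p : Fin N → ℝ}
    (hlam : ∀ i, lam i ∈ Set.Ioo (0 : ℝ) 1) (hp : ∀ i, 0 < p i) (hpsum : ∑ i, p i = 1)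
    {f : Fin N → EuclideanSpace ℝ (Fin d) → EuclideanSpace ℝ (Fin d)}
    (hf : ∀ i x y, dist (f i x) (f i y) = lam i * dist x y)
    {π : (ℕ → Fin N) → EuclideanSpace ℝ (Fin d)}
    (hπ : ∀ x, Tendsto (fun n => prefixMap f x n 0) atTop (𝓝 (π x)))
    {D : ℝ} (hD : ∀ x y, dist (π x) (π y) ≤ D)
    {μ : Measure (ℕ → Fin N)} [IsProbabilityMeasure μ]
    (hμ : ∀ (m : ℕ) (w : Fin m → Fin N), μ (_root_.cylinder w) = ENNReal.ofReal (wordProd p w))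
    {α : ℝ} (hα : 0 < α) {ℓ : ℕ → ℕ}
    (hℓ : Filter.liminf (fun n : ℕ => (ℓ n : ℝ) / Real.log n) Filter.atTop = 1 / α)
    {q s β : ℝ} (hq0 : 0 ≤ q) (hq1 : q ≤ 1) (hβ : α < β) (hs : 0 < s)
    (hlt : ∑ i, lam i ^ s * (p i * Real.exp β) ^ q < 1) :
    ∀ᵐ o ∂μ, dimH (π '' limsupCylinders ℓ o) ≤ ENNReal.ofReal s := by
  have hD0 : 0 ≤ D := dist_nonneg.trans (hD (fun _ => 0) (fun _ => 0))
  obtain ⟨c, M, -, -, hM0, hM1, hcM⟩ := exists_lam_bounds hlam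
  filter_upwards [ae_tsum_occurs_lt_top (fun i => (hlam i).1) hp hpsum hμ hq0 hq1
    (hα.trans hβ).le hlt] with o ho
  classical
  let t : ℕ → (Σ L : ℕ, (Fin L → Fin N)) → Set (EuclideanSpace ℝ (Fin d)) := fun L0 x =>
    if L0 ≤ x.1 ∧ o ∈ occurs (⌊Real.exp (β * x.1)⌋₊ + 1) x.2 then π '' _root_.cylinder x.2 else ∅
  have hmain : μH[s] (π '' limsupCylinders ℓ o) ≤
      liminf (fun L0 => ∑' x, Metric.ediam (t L0 x) ^ s) atTop := by
    refine Measure.hausdorffMeasure_le_liminf_tsum s _ (fun L0 => ENNReal.ofReal (M ^ L0 * D))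
      ?_ t ?_ ?_
    · have h := (tendsto_pow_atTop_nhds_zero_of_lt_one hM0.le hM1).mul_const D
      rw [zero_mul] at h
      simpa using ENNReal.tendsto_ofReal h
    · refine Eventually.of_forall fun L0 x => ?_
      simp only [t]
      split_ifs with h
      · refine (ediam_image_cylinder_le hlam hf hπ hD x.2).trans (ENNReal.ofReal_le_ofReal ?_)
        refine mul_le_mul_of_nonneg_right ?_ hD0
        calc wordProd lam x.2 ≤ ∏ _j : Fin x.1, M :=
              Finset.prod_le_prod (fun _ _ => (hlam _).1.le) fun _ _ => (hcM _).2
          _ = M ^ x.1 := by simp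
          _ ≤ M ^ L0 := pow_le_pow_of_le_one hM0.le hM1.le h.1
      · simp
    · refine Eventually.of_forall fun L0 => ?_
      rintro _ ⟨x, hx, rfl⟩
      obtain ⟨k, hk⟩ := eventually_atTop.1 (((liminf_bounds hα hℓ).1 β hβ).and
        ((tendsto_length hα hℓ).eventually_ge_atTop L0))
      have hxk := mem_iInter.1 hx k
      simp only [mem_iUnion] at hxk
      obtain ⟨n, hn, hxn⟩ := hxk
      refine mem_iUnion.2 ⟨⟨ℓ n, fun j => o (n + j)⟩, ?_⟩
      have hocc : o ∈ occurs (⌊Real.exp (β * ℓ n)⌋₊ + 1) (fun j : Fin (ℓ n) => o (n + j)) := by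
        simp only [occurs, mem_iUnion]
        exact ⟨n, Finset.mem_range.2 (Nat.lt_succ_of_le (Nat.le_floor (hk n hn).1)), rfl⟩
      simp only [t]
      rw [if_pos ⟨(hk n hn).2, hocc⟩]
      exact mem_image_of_mem _ hxn
  have hle : ∀ L0, ∑' x, Metric.ediam (t L0 x) ^ s ≤
      ENNReal.ofReal (D ^ s) * ∑' x : Σ L : ℕ, (Fin L → Fin N),
      (occurs (⌊Real.exp (β * x.1)⌋₊ + 1) x.2).indicator
        (fun _ => ENNReal.ofReal (wordProd lam x.2 ^ s)) o := by
    intro L0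
    rw [← ENNReal.tsum_mul_left]
    refine ENNReal.tsum_le_tsum fun x => ?_
    simp only [t]
    have hw := (wordProd_pos (fun i => (hlam i).1) x.2).le
    split_ifs with h
    · rw [indicator_of_mem h.2, ← ENNReal.ofReal_mul (by positivity),
        ← Real.mul_rpow hD0 hw, mul_comm D, ← ENNReal.ofReal_rpow_of_nonneg (by positivity) hs.le]
      exact ENNReal.rpow_le_rpow (ediam_image_cylinder_le hlam hf hπ hD x.2) hs.le
    · simp [ENNReal.zero_rpow_of_pos hs]
  have hfin : μH[s] (π '' limsupCylinders ℓ o) ≠ ⊤ := by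
    refine ne_top_of_le_ne_top (ENNReal.mul_ne_top (ENNReal.ofReal_ne_top (r := D ^ s)) ho.ne)
      (hmain.trans ?_)
    exact (liminf_le_liminf (Eventually.of_forall hle)).trans (liminf_const _).le
  have := dimH_le_of_hausdorffMeasure_ne_top (d := s.toNNReal) (s := π '' limsupCylinders ℓ o) (by
    rwa [Real.coe_toNNReal s hs.le])
  exact this

end CoverSpec

/-! ### The dimension and the measure of the complement -/

/-- In the region `−Σ λ_i^(P_α(1)) p_i e^α log p_i < α < −Σ λ_i^(s₀) log p_i`: a.s.
`dim_H R(ō,ℓ) = inf_(q ∈ [0,1]) P_α(q)` and `Λ ∖ R(ō,ℓ)` has full `s₀`-Hausdorff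
measure. -/
theorem dimH_coverSet_spectrum_region {N d : ℕ} [NeZero N] (hN : 2 ≤ N)
    (lam p : Fin N → ℝ)
    (hlam : ∀ i, lam i ∈ Set.Ioo (0 : ℝ) 1)
    (hp : ∀ i, 0 < p i) (hpsum : ∑ i, p i = 1)
    (f : Fin N → EuclideanSpace ℝ (Fin d) → EuclideanSpace ℝ (Fin d))
    (hf : ∀ i x y, dist (f i x) (f i y) = lam i * dist x y)
    (Λ : Set (EuclideanSpace ℝ (Fin d)))
    (hΛne : Λ.Nonempty) (hΛc : IsCompact Λ) (hΛ : Λ = ⋃ i, f i '' Λ)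
    (U : Set (EuclideanSpace ℝ (Fin d)))
    (hUne : U.Nonempty) (hUo : IsOpen U) (hUb : Bornology.IsBounded U)
    (hUsub : ∀ i, f i '' U ⊆ U)
    (hUdisj : Pairwise fun i j => Disjoint (f i '' U) (f j '' U))
    (π : (ℕ → Fin N) → EuclideanSpace ℝ (Fin d))
    (hπ : ∀ x, Filter.Tendsto (fun n => prefixMap f x n 0) Filter.atTop (nhds (π x)))
    (μ : Measure (ℕ → Fin N)) [IsProbabilityMeasure μ]
    (hμ : ∀ (m : ℕ) (w : Fin m → Fin N), μ (cylinder w) = ENNReal.ofReal (wordProd p w))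
    (α : ℝ) (hα : 0 < α)
    (ℓ : ℕ → ℕ) (hℓmono : Monotone ℓ)
    (hℓ : Filter.liminf (fun n : ℕ => (ℓ n : ℝ) / Real.log n) Filter.atTop = 1 / α)
    (P : ℝ → ℝ)
    (hP : ∀ q : ℝ, ∑ i, lam i ^ P q * (p i * Real.exp α) ^ q = 1)
    (s0 : ℝ) (hs0 : ∑ i, lam i ^ s0 = 1)
    (hαgt : -∑ i, lam i ^ P 1 * (p i * Real.exp α) * Real.log (p i) < α)
    (hαlt : α < -∑ i, lam i ^ s0 * Real.log (p i)) :
    ∀ᵐ o ∂μ,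
      dimH (π '' limsupCylinders ℓ o) = ENNReal.ofReal (sInf (P '' Set.Icc 0 1)) ∧
      μH[s0] (Λ \ π '' limsupCylinders ℓ o) = μH[s0] Λ := by
  have hl : ∀ i, 0 < lam i := fun i => (hlam i).1
  have hconv : ∀ (i : Fin N) (s q β : ℝ), lam i ^ s * (p i * Real.exp β) ^ q =
      Real.exp (s * Real.log (lam i) + q * (Real.log (p i) + β)) := by
    intro i s q β
    rw [Real.rpow_def_of_pos (hl i), Real.rpow_def_of_pos (mul_pos (hp i) (Real.exp_pos _)),
      Real.log_mul (hp i).ne' (Real.exp_pos _).ne', Real.log_exp, ← Real.exp_add]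
    congr 1; ring
  set u : Fin N → ℝ := fun i => Real.log (lam i) with hu_def
  set v : Fin N → ℝ := fun i => Real.log (p i) + α with hv_def
  have hu : ∀ i, u i < 0 := fun i => Real.log_neg (hl i) (hlam i).2
  have hP' : ∀ q, ∑ i, Real.exp (P q * u i + q * v i) = 1 := fun q => by
    rw [← hP q]; exact Finset.sum_congr rfl fun i _ => (hconv i _ _ _).symm
  have hpow : ∀ (i : Fin N) (s : ℝ), lam i ^ s = Real.exp (s * u i) := fun i s => by
    rw [Real.rpow_def_of_pos (hl i), mul_comm]
  have hP0 : P 0 = s0 := by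
    have h1 : ∑ i, Real.exp (P 0 * u i) = 1 := by simpa using hP' 0
    have h2 : ∑ i, Real.exp (s0 * u i) = 1 := by
      rw [← hs0]; exact Finset.sum_congr rfl fun i _ => (hpow i s0).symm
    have hanti : ∀ s t : ℝ, s < t → ∑ i, Real.exp (t * u i) < ∑ i, Real.exp (s * u i) :=
      fun s t hst => Finset.sum_lt_sum_of_nonempty Finset.univ_nonempty fun i _ =>
        Real.exp_lt_exp.2 (by nlinarith [hu i])
    rcases lt_trichotomy (P 0) s0 with h | h | h
    · have := hanti _ _ h; linarith
    · exact h
    · have := hanti _ _ h; linarith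
  have h0 : ∑ i, Real.exp (P 0 * u i) * v i < 0 := by
    have : ∑ i, Real.exp (P 0 * u i) * v i =
        ∑ i, lam i ^ s0 * Real.log (p i) + α * ∑ i, lam i ^ s0 := by
      rw [Finset.mul_sum, ← Finset.sum_add_distrib]
      refine Finset.sum_congr rfl fun i _ => ?_
      rw [hP0, ← hpow, hv_def]; ring
    rw [this, hs0]; linarith
  have hc1 : ∀ i, Real.exp (P 1 * u i + v i) = lam i ^ P 1 * (p i * Real.exp α) := fun i => by
    have := hconv i (P 1) 1 α
    rw [Real.rpow_one, one_mul] at this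
    exact this.symm
  have hc1sum : ∑ i, Real.exp (P 1 * u i + v i) = 1 := by simpa using hP' 1
  have h1 : 0 < ∑ i, Real.exp (P 1 * u i + v i) * v i := by
    have : ∑ i, Real.exp (P 1 * u i + v i) * v i =
        ∑ i, lam i ^ P 1 * (p i * Real.exp α) * Real.log (p i) +
          α * ∑ i, Real.exp (P 1 * u i + v i) := by
      rw [Finset.mul_sum, ← Finset.sum_add_distrib]
      refine Finset.sum_congr rfl fun i _ => ?_
      rw [← hc1, hv_def]; ring
    rw [this, hc1sum]; linarith
  obtain ⟨q0, hq0, hcrit, hmin, hlt0, hpos⟩ := CoverSpec.exists_critical hN u v hu P hP' h0 h1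
  have hinf : sInf (P '' Set.Icc 0 1) = P q0 :=
    IsLeast.csInf_eq ⟨mem_image_of_mem _ ⟨hq0.1.le, hq0.2.le⟩, by
      rintro _ ⟨q, -, rfl⟩; exact hmin q⟩
  have hπΛ : ∀ x, π x ∈ Λ := CoverSpec.coding_mem hlam hf hπ hΛne hΛc hΛ
  have hlower : ∀ᵐ o ∂μ, ∀ r : ℚ, 0 < (r : ℝ) → (r : ℝ) < P q0 →
      ENNReal.ofReal r ≤ dimH (π '' limsupCylinders ℓ o) := by
    refine ae_all_iff.2 fun r => ?_
    by_cases hr : 0 < (r : ℝ) ∧ (r : ℝ) < P q0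
    swap
    · exact Eventually.of_forall fun o h1 h2 => absurd ⟨h1, h2⟩ hr
    obtain ⟨b, hb, hbsum, hbv, hbs⟩ := CoverSpec.exists_weights u v
      (fun i => Real.exp (P q0 * u i + q0 * v i)) (fun i => Real.exp (P 1 * u i + v i)) r
      (fun i => Real.exp_pos _) (fun i => Real.exp_pos _) (hP' q0) hc1sum hcrit h1 (by
        -- the entropy-type sum equals `(P q₀ - r) ∑ a u` because `∑ a v = 0`
        have : ∑ i, Real.exp (P q0 * u i + q0 * v i) *
            (Real.log (Real.exp (P q0 * u i + q0 * v i)) - r * u i) =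
            (P q0 - r) * ∑ i, Real.exp (P q0 * u i + q0 * v i) * u i +
            q0 * ∑ i, Real.exp (P q0 * u i + q0 * v i) * v i := by
          rw [Finset.mul_sum, Finset.mul_sum, ← Finset.sum_add_distrib]
          refine Finset.sum_congr rfl fun i _ => ?_
          rw [Real.log_exp]; ring
        rw [this, hcrit, mul_zero, add_zero]
        refine mul_neg_of_pos_of_neg (by linarith [hr.2]) ?_
        exact Finset.sum_neg (fun i _ => mul_neg_of_pos_of_neg (Real.exp_pos _) (hu i))
          Finset.univ_nonempty)
    filter_upwards [CoverSpec.ae_le_dimH hlam hp hpsum hf hΛc.isBounded hUne hUo hUsub hUdisj hπ hπΛ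
      hμ hα hℓmono hℓ hb hbsum hbv hr.1 hbs] with o ho _ _
    exact ho
  have hupper : ∀ᵐ o ∂μ, ∀ r : ℚ, P q0 < (r : ℝ) →
      dimH (π '' limsupCylinders ℓ o) ≤ ENNReal.ofReal r := by
    refine ae_all_iff.2 fun r => ?_
    by_cases hr : P q0 < (r : ℝ)
    swap
    · exact Eventually.of_forall fun o h1 => absurd h1 hr
    obtain ⟨ε, hε, hsub⟩ := CoverSpec.exists_subcritical u v hu q0 (P q0) r (hP' q0) hr
    have hD : ∀ x y, dist (π x) (π y) ≤ Metric.diam Λ := fun x y =>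
      Metric.dist_le_diam_of_mem hΛc.isBounded (hπΛ x) (hπΛ y)
    filter_upwards [CoverSpec.ae_dimH_le hlam hp hpsum hf hπ hD hμ hα hℓ hq0.1.le hq0.2.le
      (β := α + ε) (s := r) (by linarith) (hpos.trans hr) (by
        refine lt_of_eq_of_lt (Finset.sum_congr rfl fun i _ => ?_) hsub
        rw [hconv, hv_def]; congr 1; ring)] with o ho _
    exact ho
  filter_upwards [hlower, hupper] with o ho1 ho2
  have hdim : dimH (π '' limsupCylinders ℓ o) = ENNReal.ofReal (P q0) := by
    refine le_antisymm ?_ ?_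
    · by_contra! hcon
      obtain ⟨r, -, hr1, hr2⟩ := ENNReal.lt_iff_exists_rat_btwn.1 hcon
      exact (ho2 r ((ENNReal.ofReal_lt_ofReal_iff_of_nonneg hpos.le).1 hr1)).not_gt hr2
    · by_contra! hcon
      obtain ⟨r, -, hr1, hr2⟩ := ENNReal.lt_iff_exists_rat_btwn.1 hcon
      have hr0 : 0 < (r : ℝ) := ENNReal.ofReal_pos.1 (bot_le.trans_lt hr1)
      exact (ho1 r hr0 ((ENNReal.ofReal_lt_ofReal_iff hpos).1 hr2)).not_gt hr1
  refine ⟨by rw [hinf, hdim], measure_sdiff_null ?_⟩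
  have hs0pos : 0 < s0 := by linarith
  have := hausdorffMeasure_of_dimH_lt (d := s0.toNNReal) (s := π '' limsupCylinders ℓ o) (by
    rw [hdim]
    exact (ENNReal.ofReal_lt_ofReal_iff hs0pos).2 (by linarith))
  rwa [Real.coe_toNNReal s0 hs0pos.le] at this
end
end

section
/- Let Φ = {f_1,…,f_N} be an iterated function system of contracting similarities on ℝ^d with ratios λ_1,…,λ_N satisfying the open set condition, and let ν be a Borel measure on the symbolic space Σ with 0 < ν(Σ) < ∞. If t > 0 satisfies Σ_{ī ∈ Σ_*} λ_ī^{−t} ν([ī])² < ∞, where the sum ranges over all finite words ī over the alphabet {1,…,N}, then every Borel set A ⊆ ℝ^d with (π_*ν)(A) > 0 has Hausdorff dimension at least t. -/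
/-!
The proof transfers a cover of `A` to the symbolic space and applies Cauchy–Schwarz there.

Suppose `dim_H A < t`. Then `A` has `t`-dimensional Hausdorff measure zero, so it is covered by
sets `S j` of diameter at most `r j < 1` with `∑ (r j)^t` as small as desired (`exists_cover`).
Cut every sequence at the first prefix whose ratio is at most `r j` (`moranCut`). Distinct cut
words are incomparable, so by the open set condition their maps send `U` to disjoint sets, each
containing a ball of radius comparable to `r j`; since these balls lie within distance comparable
to `r j` of `S j` as soon as the projected cylinder meets `S j`, at most `K` cut words matter for
`S j`, with `K` independent of `j` (`exists_cut_bound`). This uses that similarities of `ℝ^d` are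
onto (`similarity_surjective`), so that they carry balls to balls.

Hence `π ⁻¹' A` is covered by the cylinders of a set `W` of words with
`∑_{w ∈ W} λ_w^t ≤ K ∑ (r j)^t ≤ K ε²`, and
`ν (π ⁻¹' A) ≤ ∑_W ν[w] ≤ ε⁻¹ ∑_W λ_w^t + ε ∑_W λ_w^(-t) ν[w]² ≤ ε (K + E)`,
where `E` is the finite energy (`le_weighted` is the termwise inequality). Letting `ε → 0` gives
`ν (π ⁻¹' A) = 0`.
-/

open MeasureTheory Filter Topology Set ENNReal

noncomputable section

/-- The ratio `λ_{x 0} ⋯ λ_{x (n-1)}` of the `n`-th prefix map of `x`. -/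
def prefixRatio {N : ℕ} (lam : Fin N → ℝ) (x : ℕ → Fin N) (n : ℕ) : ℝ :=
  ∏ k ∈ Finset.range n, lam (x k)

lemma wordProd_prefix {N : ℕ} (lam : Fin N → ℝ) (x : ℕ → Fin N) (n : ℕ) :
    wordProd lam (fun j : Fin n => x j) = prefixRatio lam x n :=
  Fin.prod_univ_eq_prod_range (fun k => lam (x k)) n

lemma prefixRatio_pos {N : ℕ} {lam : Fin N → ℝ} (hlam : ∀ i, lam i ∈ Set.Ioo (0 : ℝ) 1)
    (x : ℕ → Fin N) (n : ℕ) : 0 < prefixRatio lam x n :=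
  Finset.prod_pos fun k _ => (hlam (x k)).1

lemma prefixRatio_le_one {N : ℕ} {lam : Fin N → ℝ} (hlam : ∀ i, lam i ∈ Set.Ioo (0 : ℝ) 1)
    (x : ℕ → Fin N) (n : ℕ) : prefixRatio lam x n ≤ 1 :=
  Finset.prod_le_one (fun k _ => (hlam (x k)).1.le) fun k _ => (hlam (x k)).2.le

lemma exists_prefixRatio_le {N : ℕ} [NeZero N] {lam : Fin N → ℝ}
    (hlam : ∀ i, lam i ∈ Set.Ioo (0 : ℝ) 1) (x : ℕ → Fin N) {r : ℝ} (hr : 0 < r) :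
    ∃ n, prefixRatio lam x n ≤ r := by
  obtain ⟨i, hi⟩ := Finite.exists_max lam
  obtain ⟨n, hn⟩ := exists_pow_lt_of_lt_one hr (hlam i).2
  refine ⟨n, le_trans ?_ hn.le⟩
  calc prefixRatio lam x n ≤ ∏ _k ∈ Finset.range n, lam i :=
        Finset.prod_le_prod (fun k _ => (hlam (x k)).1.le) fun k _ => hi _
    _ = lam i ^ n := by simp

/-! ### Geometry of the prefix maps -/

lemma dist_prefixMap {N : ℕ} {E : Type*} [MetricSpace E] {lam : Fin N → ℝ} {f : Fin N → E → E}
    (hf : ∀ i x y, dist (f i x) (f i y) = lam i * dist x y) (x : ℕ → Fin N) (n : ℕ) (a b : E) :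
    dist (prefixMap f x n a) (prefixMap f x n b) = prefixRatio lam x n * dist a b := by
  induction n generalizing x with
  | zero => simp [prefixMap, prefixRatio]
  | succ n ih =>
    simp only [prefixMap, hf, ih, prefixRatio, Finset.prod_range_succ']
    ring

lemma prefixMap_surjective {N : ℕ} {E : Type*} {f : Fin N → E → E}
    (hf : ∀ i, Function.Surjective (f i)) (x : ℕ → Fin N) (n : ℕ) :
    Function.Surjective (prefixMap f x n) := by
  induction n generalizing x with
  | zero => exact Function.surjective_id
  | succ n ih => exact (hf (x 0)).comp (ih _)

lemma prefixMap_mem {N : ℕ} {E : Type*} {f : Fin N → E → E} {U : Set E}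
    (hU : ∀ i, f i '' U ⊆ U) (x : ℕ → Fin N) (n : ℕ) {u : E} (hu : u ∈ U) :
    prefixMap f x n u ∈ U := by
  induction n generalizing x with
  | zero => exact hu
  | succ n ih => exact hU _ ⟨_, ih _, rfl⟩

lemma prefixMap_add {N : ℕ} {E : Type*} (f : Fin N → E → E) (x : ℕ → Fin N) (n m : ℕ) (a : E) :
    prefixMap f x (n + m) a = prefixMap f x n (prefixMap f (fun k => x (k + n)) m a) := by
  induction n generalizing x with
  | zero => simp [prefixMap]
  | succ n ih =>
    rw [Nat.succ_add]
    simp only [prefixMap, ih]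
    congr 2

/-- Under the open set condition, incomparable words have disjoint images of `U`. -/
lemma prefixMap_ne {N : ℕ} {E : Type*} {f : Fin N → E → E} (hinj : ∀ i, Function.Injective (f i))
    {U : Set E} (hU : ∀ i, f i '' U ⊆ U)
    (hdisj : Pairwise fun i j => Disjoint (f i '' U) (f j '' U))
    {k n m : ℕ} {x y : ℕ → Fin N} (hkn : k < n) (hkm : k < m) (hk : x k ≠ y k)
    {u v : E} (hu : u ∈ U) (hv : v ∈ U) : prefixMap f x n u ≠ prefixMap f y m v := by
  induction k generalizing n m x y with
  | zero =>
    obtain ⟨n, rfl⟩ := Nat.exists_eq_succ_of_ne_zero hkn.ne'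
    obtain ⟨m, rfl⟩ := Nat.exists_eq_succ_of_ne_zero hkm.ne'
    exact (hdisj hk).ne_of_mem ⟨_, prefixMap_mem hU _ n hu, rfl⟩ ⟨_, prefixMap_mem hU _ m hv, rfl⟩
  | succ k ih =>
    obtain ⟨n, rfl⟩ := Nat.exists_eq_succ_of_ne_zero (Nat.ne_zero_of_lt hkn)
    obtain ⟨m, rfl⟩ := Nat.exists_eq_succ_of_ne_zero (Nat.ne_zero_of_lt hkm)
    by_cases h0 : x 0 = y 0
    · intro h
      simp only [prefixMap, h0] at h
      exact ih (x := fun k => x (k + 1)) (y := fun k => y (k + 1)) (Nat.lt_of_succ_lt_succ hkn)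
        (Nat.lt_of_succ_lt_succ hkm) hk (hinj _ h)
    · exact (hdisj h0).ne_of_mem ⟨_, prefixMap_mem hU _ n hu, rfl⟩
        ⟨_, prefixMap_mem hU _ m hv, rfl⟩

/-- A similarity of a finite-dimensional Euclidean space is onto: rescaled to an isometry, it is
affine by strict convexity, hence bijective by a dimension count. -/
lemma similarity_surjective {d : ℕ} {c : ℝ} (hc : 0 < c)
    {g : EuclideanSpace ℝ (Fin d) → EuclideanSpace ℝ (Fin d)}
    (hg : ∀ x y, dist (g x) (g y) = c * dist x y) : Function.Surjective g := by
  have hiso : Isometry (fun x => c⁻¹ • g x) := by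
    refine Isometry.of_dist_eq fun x y => ?_
    rw [dist_smul₀, hg, Real.norm_of_nonneg (inv_pos.2 hc).le]
    field_simp
  have hlin : Function.Surjective hiso.affineIsometryOfStrictConvexSpace.linearIsometry :=
    LinearMap.injective_iff_surjective.1
      hiso.affineIsometryOfStrictConvexSpace.linearIsometry.injective
  have hs : Function.Surjective hiso.affineIsometryOfStrictConvexSpace.toAffineMap :=
    (AffineMap.linear_surjective_iff _).1 hlin
  intro z
  obtain ⟨x, hx⟩ := hs (c⁻¹ • z)
  exact ⟨x, smul_right_injective _ (inv_pos.2 hc).ne' hx⟩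

/-! ### The Moran cut -/

/-- The first `n` at which the ratio of the `n`-th prefix of `x` is at most `r`. With all
ratios in `(0, 1)` and `r > 0` such an `n` exists, so the infimum is over a nonempty set. -/
def moranCut {N : ℕ} (lam : Fin N → ℝ) (r : ℝ) (x : ℕ → Fin N) : ℕ :=
  sInf {n | prefixRatio lam x n ≤ r}

/-- The prefix of `x` of length `moranCut lam r x`, as an element of the type of all
finite words. -/
def cutWord {N : ℕ} (lam : Fin N → ℝ) (r : ℝ) (x : ℕ → Fin N) : Σ n, (Fin n → Fin N) :=
  ⟨moranCut lam r x, fun j => x j⟩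

lemma prefixRatio_cut_le {N : ℕ} [NeZero N] {lam : Fin N → ℝ}
    (hlam : ∀ i, lam i ∈ Set.Ioo (0 : ℝ) 1) {r : ℝ} (hr : 0 < r) (x : ℕ → Fin N) :
    prefixRatio lam x (moranCut lam r x) ≤ r :=
  Nat.sInf_mem (s := {n | prefixRatio lam x n ≤ r}) (exists_prefixRatio_le hlam x hr)

lemma le_prefixRatio_cut {N : ℕ} [NeZero N] {lam : Fin N → ℝ}
    (hlam : ∀ i, lam i ∈ Set.Ioo (0 : ℝ) 1) {r : ℝ} (hr : 0 < r)
    {c : ℝ} (hc : ∀ i, c ≤ lam i) (hr1 : r < 1) (x : ℕ → Fin N) :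
    c * r ≤ prefixRatio lam x (moranCut lam r x) := by
  have hle := prefixRatio_cut_le hlam hr x
  rcases hn : moranCut lam r x with _ | n
  · rw [hn] at hle
    simp only [prefixRatio, Finset.range_zero, Finset.prod_empty] at hle
    linarith
  · have hlt : r < prefixRatio lam x n := by
      by_contra! h
      have : moranCut lam r x ≤ n := Nat.sInf_le (s := {n | prefixRatio lam x n ≤ r}) h
      omega
    have hs : prefixRatio lam x (n + 1) = prefixRatio lam x n * lam (x n) :=
      Finset.prod_range_succ _ _
    rw [hs]
    nlinarith [hc (x n), (hlam (x n)).1, mul_pos (sub_pos.2 hlt) (hlam (x n)).1,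
      mul_nonneg (sub_nonneg.2 (hc (x n))) hr.le]

/-- Distinct cut words are incomparable in the prefix order. -/
lemma exists_ne_of_cutWord_ne {N : ℕ} [NeZero N] {lam : Fin N → ℝ}
    (hlam : ∀ i, lam i ∈ Set.Ioo (0 : ℝ) 1) {r : ℝ} (hr : 0 < r)
    {x y : ℕ → Fin N} (h : cutWord lam r x ≠ cutWord lam r y) :
    ∃ k, k < moranCut lam r x ∧ k < moranCut lam r y ∧ x k ≠ y k := by
  have key : ∀ x y : ℕ → Fin N, moranCut lam r x ≤ moranCut lam r y →
      (∀ k < moranCut lam r x, x k = y k) → cutWord lam r x = cutWord lam r y := by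
    intro x y hle hxy
    have hpr : prefixRatio lam y (moranCut lam r x) = prefixRatio lam x (moranCut lam r x) :=
      Finset.prod_congr rfl fun k hk => by rw [hxy k (Finset.mem_range.1 hk)]
    have hge : moranCut lam r y ≤ moranCut lam r x :=
      Nat.sInf_le (s := {n | prefixRatio lam y n ≤ r})
        (hpr.le.trans (prefixRatio_cut_le hlam hr x))
    have heq := le_antisymm hle hge
    unfold cutWord
    rw [← heq]
    congr 1
    exact funext fun j => hxy j j.2
  by_contra! hcon
  rcases le_total (moranCut lam r x) (moranCut lam r y) with hle | hle
  · exact h (key x y hle fun k hk => hcon k hk (hk.trans_le hle))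
  · exact h (key y x hle fun k hk => (hcon k (hk.trans_le hle) hk).symm).symm

/-! ### Counting words near a small set -/

/-- Uniformly in `y` and `r`, a `c * r`-separated family in the ball of radius `R * r` about `y`
has at most `K` members: rescale by `r⁻¹` and cover one fixed ball by balls of radius `c / 2`. -/
lemma exists_separated_bound {d : ℕ} (R : ℝ) {c : ℝ} (hc : 0 < c) :
    ∃ K : ℕ, ∀ (y : EuclideanSpace ℝ (Fin d)) (r : ℝ), 0 < r →
      ∀ {ι : Type} (W : Set ι) (p : ι → EuclideanSpace ℝ (Fin d)),
        (∀ w ∈ W, dist (p w) y ≤ R * r) →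
        (∀ w ∈ W, ∀ v ∈ W, w ≠ v → c * r ≤ dist (p w) (p v)) →
        W.encard ≤ K := by
  obtain ⟨T, -, hT, hcov⟩ := finite_cover_balls_of_compact
    (isCompact_closedBall (0 : EuclideanSpace ℝ (Fin d)) R) (half_pos hc)
  refine ⟨T.ncard, fun y r hr ι W p hW hsep => ?_⟩
  have hchoose : ∀ w : ι, ∃ z, w ∈ W → z ∈ T ∧ dist (r⁻¹ • (p w - y)) z < c / 2 := by
    intro w
    by_cases hw : w ∈ W
    · have hmem : r⁻¹ • (p w - y) ∈ Metric.closedBall (0 : EuclideanSpace ℝ (Fin d)) R := by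
        rw [mem_closedBall_zero_iff, norm_smul, Real.norm_of_nonneg (inv_pos.2 hr).le,
          ← dist_eq_norm, inv_mul_le_iff₀ hr, mul_comm]
        exact hW w hw
      have := hcov hmem
      simp only [mem_iUnion, Metric.mem_ball] at this
      obtain ⟨z, hz, hz'⟩ := this
      exact ⟨z, fun _ => ⟨hz, hz'⟩⟩
    · exact ⟨0, fun h => absurd h hw⟩
  choose q hq using hchoose
  rw [hT.cast_ncard_eq]
  refine Set.encard_le_encard_of_injOn (f := q) (fun w hw => (hq w hw).1) ?_
  intro w hw v hv hqq
  by_contra hne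
  have h1 := (hq w hw).2
  have h2 := (hq v hv).2
  rw [← hqq] at h2
  have h3 := dist_triangle_right (r⁻¹ • (p w - y)) (r⁻¹ • (p v - y)) (q w)
  rw [dist_smul₀, dist_sub_right, Real.norm_of_nonneg (inv_pos.2 hr).le] at h3
  have h4 := hsep w hw v hv hne
  have h5 : c ≤ r⁻¹ * dist (p w) (p v) := by
    rw [le_inv_mul_iff₀ hr, mul_comm]
    exact h4
  linarith

/-- Under the open set condition, a set of diameter at most `r < 1` meets the projections of at
most `K` cylinders of the Moran cut at scale `r`, with `K` independent of the set and of `r`. -/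
lemma exists_cut_bound {N d : ℕ} [NeZero N] {lam : Fin N → ℝ}
    (hlam : ∀ i, lam i ∈ Set.Ioo (0 : ℝ) 1)
    {f : Fin N → EuclideanSpace ℝ (Fin d) → EuclideanSpace ℝ (Fin d)}
    (hf : ∀ i x y, dist (f i x) (f i y) = lam i * dist x y)
    {U : Set (EuclideanSpace ℝ (Fin d))}
    (hUne : U.Nonempty) (hUo : IsOpen U) (hUb : Bornology.IsBounded U)
    (hUsub : ∀ i, f i '' U ⊆ U)
    (hUdisj : Pairwise fun i j => Disjoint (f i '' U) (f j '' U))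
    {π : (ℕ → Fin N) → EuclideanSpace ℝ (Fin d)}
    (hπ : ∀ x, Filter.Tendsto (fun n => prefixMap f x n 0) Filter.atTop (nhds (π x))) :
    ∃ K : ℕ, ∀ r : ℝ, 0 < r → r < 1 → ∀ S : Set (EuclideanSpace ℝ (Fin d)),
      (∀ a ∈ S, ∀ b ∈ S, dist a b ≤ r) → (cutWord lam r '' (π ⁻¹' S)).encard ≤ K := by
  obtain ⟨u, hu⟩ := hUne
  obtain ⟨ρ, hρ, hball⟩ := Metric.isOpen_iff.1 hUo u hu
  obtain ⟨i₀, hi₀⟩ := Finite.exists_min lam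
  have hc := (hlam i₀).1
  obtain ⟨D, hD⟩ := hUb.subset_closedBall u
  have hinj : ∀ i, Function.Injective (f i) := fun i a b hab => by
    have := hf i a b
    rw [hab, dist_self, eq_comm, mul_eq_zero] at this
    exact dist_eq_zero.1 (this.resolve_left (hlam i).1.ne')
  have hsurj : ∀ i, Function.Surjective (f i) := fun i => similarity_surjective (hlam i).1 (hf i)
  -- All finite compositions send `0` within `R` of `u`.
  set R := dist (0 : EuclideanSpace ℝ (Fin d)) u + D with hR
  have hRb : ∀ x m, dist (prefixMap f x m 0) u ≤ R := fun x m => by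
    have h1 : dist (prefixMap f x m 0) (prefixMap f x m u) ≤ dist 0 u := by
      rw [dist_prefixMap hf]
      exact mul_le_of_le_one_left dist_nonneg (prefixRatio_le_one hlam x m)
    have h2 : dist (prefixMap f x m u) u ≤ D := hD (prefixMap_mem hUsub x m hu)
    linarith [dist_triangle (prefixMap f x m 0) (prefixMap f x m u) u]
  have hR0 : 0 ≤ R := dist_nonneg.trans (hRb (fun _ => i₀) 0)
  have hnear : ∀ x n, dist (prefixMap f x n u) (π x) ≤ R * prefixRatio lam x n := fun x n => by
    have ht : Tendsto (fun m => dist (prefixMap f x n u) (prefixMap f x (m + n) 0)) atTop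
        (𝓝 (dist (prefixMap f x n u) (π x))) :=
      tendsto_const_nhds.dist ((tendsto_add_atTop_iff_nat n).2 (hπ x))
    refine le_of_tendsto' ht fun m => ?_
    rw [add_comm m n, prefixMap_add, dist_prefixMap hf, dist_comm, mul_comm]
    exact mul_le_mul_of_nonneg_right (hRb _ _) (prefixRatio_pos hlam x n).le
  obtain ⟨K, hK⟩ := exists_separated_bound (d := d) (R + 1) (mul_pos hc hρ)
  refine ⟨K, fun r hr hr1 S hS => ?_⟩
  rcases (π ⁻¹' S).eq_empty_or_nonempty with hemp | ⟨x₀, hx₀⟩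
  · simp [hemp]
  -- A cut word is represented by an arbitrary sequence of `π ⁻¹' S` that begins with it.
  have hrep : ∀ w : Σ n, (Fin n → Fin N), ∃ x, w ∈ cutWord lam r '' (π ⁻¹' S) →
      x ∈ π ⁻¹' S ∧ cutWord lam r x = w := fun w => by
    by_cases hw : w ∈ cutWord lam r '' (π ⁻¹' S)
    · obtain ⟨x, hx, hxw⟩ := hw
      exact ⟨x, fun _ => ⟨hx, hxw⟩⟩
    · exact ⟨x₀, fun h => absurd h hw⟩
  choose e he using hrep
  refine hK (π x₀) r hr _ (fun w => prefixMap f (e w) (moranCut lam r (e w)) u) ?_ ?_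
  · intro w hw
    have h1 := hnear (e w) (moranCut lam r (e w))
    have h2 := mul_le_mul_of_nonneg_left (prefixRatio_cut_le hlam hr (e w)) hR0
    have h3 := hS _ (he w hw).1 _ hx₀
    linarith [dist_triangle (prefixMap f (e w) (moranCut lam r (e w)) u) (π (e w)) (π x₀)]
  · intro w hw v hv hwv
    have hne : cutWord lam r (e w) ≠ cutWord lam r (e v) := by
      rwa [(he w hw).2, (he v hv).2]
    obtain ⟨k, hkw, hkv, hk⟩ := exists_ne_of_cutWord_ne hlam hr hne
    -- Were the images of `u` closer, the image of `u` under the second map would lie in the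
    -- image of `ball u ρ ⊆ U` under the first.
    by_contra! hlt
    obtain ⟨z, hz⟩ := prefixMap_surjective hsurj (e w) (moranCut lam r (e w))
      (prefixMap f (e v) (moranCut lam r (e v)) u)
    rw [← hz, dist_prefixMap hf] at hlt
    have hge := le_prefixRatio_cut hlam hr hi₀ hr1 (e w)
    have hzU : z ∈ U := by
      apply hball
      rw [Metric.mem_ball, dist_comm]
      by_contra! hρz
      have := mul_le_mul hge hρz hρ.le (prefixRatio_pos hlam _ _).le
      linarith [mul_right_comm (lam i₀) ρ r]
    exact prefixMap_ne hinj hUsub hUdisj hkw hkv hk hzU hu hz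

/-! ### Covers of small Hausdorff content -/

/-- A set of `t`-dimensional Hausdorff measure zero is covered by countably many sets of diameter
at most `r j` with `∑ (r j)^t` arbitrarily small. The scales `r j` are positive even for sets that
degenerate to points, so that each defines a Moran cut. -/
lemma exists_cover {X : Type*} [MetricSpace X] [MeasurableSpace X] [BorelSpace X] {t : ℝ}
    (ht : 0 < t) {A : Set X} (hA : μH[t] A = 0) {ε : ℝ≥0∞} (hε : 0 < ε) :
    ∃ (S : ℕ → Set X) (r : ℕ → ℝ), A ⊆ ⋃ j, S j ∧ (∀ j, 0 < r j ∧ r j < 1) ∧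
      (∀ j, ∀ a ∈ S j, ∀ b ∈ S j, dist a b ≤ r j) ∧
      ∑' j, ENNReal.ofReal (r j ^ t) ≤ ε := by
  have hε2 : ε / 2 ≠ 0 := (ENNReal.half_pos hε.ne').ne'
  rw [Measure.hausdorffMeasure_apply] at hA
  have h1 : (⨅ (S : ℕ → Set X) (_ : A ⊆ ⋃ n, S n) (_ : ∀ n, Metric.ediam (S n) ≤ 2⁻¹),
      ∑' n, ⨆ _ : (S n).Nonempty, Metric.ediam (S n) ^ t) < ε / 2 := by
    refine lt_of_le_of_lt ?_ (pos_iff_ne_zero.2 hε2)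
    rw [← hA]
    exact le_iSup₂_of_le (2⁻¹ : ℝ≥0∞) (by simp) le_rfl
  simp only [iInf_lt_iff] at h1
  obtain ⟨S, hcov, hdiam, hsum⟩ := h1
  obtain ⟨δ, hδ, hδs⟩ := ENNReal.exists_pos_sum_of_countable hε2 ℕ
  have hfin : ∀ j, Metric.ediam (S j) ≠ ⊤ := fun j => ((hdiam j).trans_lt (by simp)).ne
  have hD : ∀ j, Metric.diam (S j) ≤ 2⁻¹ := fun j => by
    have := ENNReal.toReal_mono (by simp) (hdiam j)
    simpa [Metric.diam] using this
  have hr : ∀ j, ∃ r : ℝ, Metric.diam (S j) < r ∧ r < 1 ∧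
      r ^ t < Metric.diam (S j) ^ t + δ j := fun j => by
    have hcont : ContinuousAt (fun r : ℝ => r ^ t) (Metric.diam (S j)) :=
      Real.continuousAt_rpow_const _ _ (Or.inr ht.le)
    have e1 : ∀ᶠ r in 𝓝[>] (Metric.diam (S j)), r ^ t < Metric.diam (S j) ^ t + δ j :=
      (hcont.eventually_lt_const (lt_add_of_pos_right _ (by exact_mod_cast hδ j))).filter_mono
        nhdsWithin_le_nhds
    have e2 : ∀ᶠ r in 𝓝[>] (Metric.diam (S j)), r < 1 :=
      (eventually_lt_nhds ((hD j).trans_lt (by norm_num))).filter_mono nhdsWithin_le_nhds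
    obtain ⟨r, ⟨hr1, hr2⟩, hr3⟩ := ((e1.and e2).and eventually_mem_nhdsWithin).exists
    exact ⟨r, hr3, hr2, hr1⟩
  choose r hr1 hr2 hr3 using hr
  refine ⟨S, r, hcov, fun j => ⟨Metric.diam_nonneg.trans_lt (hr1 j), hr2 j⟩, ?_, ?_⟩
  · intro j a ha b hb
    exact (Metric.dist_le_diam_of_mem (Metric.isBounded_iff_ediam_ne_top.2 (hfin j)) ha hb).trans
      (hr1 j).le
  · have hterm : ∀ j, ENNReal.ofReal (r j ^ t) ≤
        (⨆ _ : (S j).Nonempty, Metric.ediam (S j) ^ t) + δ j := fun j => by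
      have h2 : ENNReal.ofReal (Metric.diam (S j) ^ t) ≤
          ⨆ _ : (S j).Nonempty, Metric.ediam (S j) ^ t := by
        rcases (S j).eq_empty_or_nonempty with he | hne
        · simp [he, Real.zero_rpow ht.ne']
        · rw [iSup_pos hne, ← ENNReal.ofReal_rpow_of_nonneg Metric.diam_nonneg ht.le, Metric.diam,
            ENNReal.ofReal_toReal (hfin j)]
      calc ENNReal.ofReal (r j ^ t) ≤ ENNReal.ofReal (Metric.diam (S j) ^ t + δ j) :=
            ENNReal.ofReal_le_ofReal (hr3 j).le
        _ ≤ ENNReal.ofReal (Metric.diam (S j) ^ t) + ENNReal.ofReal (δ j) :=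
            ENNReal.ofReal_add_le
        _ ≤ _ := by
            rw [ENNReal.ofReal_coe_nnreal]
            gcongr
    calc ∑' j, ENNReal.ofReal (r j ^ t)
        ≤ ∑' j, ((⨆ _ : (S j).Nonempty, Metric.ediam (S j) ^ t) + δ j) :=
          ENNReal.tsum_le_tsum hterm
      _ ≤ ε / 2 + ε / 2 := by
          rw [ENNReal.tsum_add]
          exact add_le_add hsum.le hδs.le
      _ = ε := ENNReal.add_halves ε

/-- Weighted arithmetic-geometric inequality, in the form that replaces Cauchy–Schwarz: either
`m ≤ ε⁻¹ a`, or `a < ε m` and then `m = a⁻¹ a m ≤ ε a⁻¹ m²`. -/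
lemma le_weighted {a : ℝ} (ha : 0 < a) {ε : ℝ} (hε : 0 < ε) {m : ℝ≥0∞} (hm : m ≠ ⊤) :
    m ≤ ENNReal.ofReal ε⁻¹ * ENNReal.ofReal a +
      ENNReal.ofReal ε * (ENNReal.ofReal a⁻¹ * m ^ 2) := by
  lift m to NNReal using hm
  rw [← ENNReal.ofReal_coe_nnreal]
  generalize hqm : (m : ℝ) = q
  have hq : 0 ≤ q := hqm ▸ m.2
  rw [← ENNReal.ofReal_pow hq, ← ENNReal.ofReal_mul (by positivity),
    ← ENNReal.ofReal_mul (by positivity), ← ENNReal.ofReal_mul (by positivity),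
    ← ENNReal.ofReal_add (by positivity) (by positivity)]
  refine ENNReal.ofReal_le_ofReal ?_
  rcases le_total q (ε⁻¹ * a) with h | h
  · have : 0 ≤ ε * (a⁻¹ * q ^ 2) := by positivity
    linarith
  · have h1 : a ≤ ε * q := by rwa [inv_mul_le_iff₀ hε] at h
    have h2 : q ≤ ε * (a⁻¹ * q ^ 2) := by
      have h3 : q * 1 ≤ q * (a⁻¹ * (ε * q)) := by
        refine mul_le_mul_of_nonneg_left ?_ hq
        rw [le_inv_mul_iff₀ ha, mul_one]
        exact h1
      linarith [show q * (a⁻¹ * (ε * q)) = ε * (a⁻¹ * q ^ 2) by ring]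
    have : 0 ≤ ε⁻¹ * a := by positivity
    linarith

/-- Energy estimate: if `Σ_(ī ∈ Σ_*) λ_ī^(−t) ν([ī])² < ∞`, then every Borel set of
positive `π_*ν`-measure has Hausdorff dimension at least `t`. -/
theorem dimH_ge_of_energy {N d : ℕ} [NeZero N] (hN : 2 ≤ N)
    (lam : Fin N → ℝ)
    (hlam : ∀ i, lam i ∈ Set.Ioo (0 : ℝ) 1)
    (f : Fin N → EuclideanSpace ℝ (Fin d) → EuclideanSpace ℝ (Fin d))
    (hf : ∀ i x y, dist (f i x) (f i y) = lam i * dist x y)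
    (Λ : Set (EuclideanSpace ℝ (Fin d)))
    (hΛne : Λ.Nonempty) (hΛc : IsCompact Λ) (hΛ : Λ = ⋃ i, f i '' Λ)
    (U : Set (EuclideanSpace ℝ (Fin d)))
    (hUne : U.Nonempty) (hUo : IsOpen U) (hUb : Bornology.IsBounded U)
    (hUsub : ∀ i, f i '' U ⊆ U)
    (hUdisj : Pairwise fun i j => Disjoint (f i '' U) (f j '' U))
    (π : (ℕ → Fin N) → EuclideanSpace ℝ (Fin d))
    (hπ : ∀ x, Filter.Tendsto (fun n => prefixMap f x n 0) Filter.atTop (nhds (π x)))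
    (ν : Measure (ℕ → Fin N)) (hν0 : 0 < ν Set.univ) (hνfin : ν Set.univ < ⊤)
    (t : ℝ) (ht : 0 < t)
    (henergy : ∑' n : ℕ, ∑ w : Fin n → Fin N,
        ENNReal.ofReal (wordProd lam w ^ (-t)) * ν (cylinder w) ^ 2 < ⊤) :
    ∀ A : Set (EuclideanSpace ℝ (Fin d)), MeasurableSet A →
      0 < ν (π ⁻¹' A) → ENNReal.ofReal t ≤ dimH A := by
  intro A _ hA
  by_contra! hdim
  have hμ : μH[t] A = 0 := by
    have := hausdorffMeasure_of_dimH_lt (d := t.toNNReal) hdim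
    rwa [Real.coe_toNNReal t ht.le] at this
  obtain ⟨K, hK⟩ := exists_cut_bound hlam hf hUne hUo hUb hUsub hUdisj hπ
  set E := ∑' n : ℕ, ∑ w : Fin n → Fin N,
    ENNReal.ofReal (wordProd lam w ^ (-t)) * ν (cylinder w) ^ 2 with hE
  have hwpos : ∀ w : Σ n, (Fin n → Fin N), 0 < wordProd lam w.2 :=
    fun w => Finset.prod_pos fun j _ => (hlam _).1
  have hbound : ∀ ε : ℝ, 0 < ε → ν (π ⁻¹' A) ≤ ENNReal.ofReal ε * (K + E) := by
    intro ε hε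
    obtain ⟨S, r, hcov, hr, hS, hsum⟩ :=
      exists_cover ht hμ (ε := ENNReal.ofReal (ε ^ 2)) (by positivity)
    let W : ℕ → Set (Σ n, (Fin n → Fin N)) := fun j => cutWord lam (r j) '' (π ⁻¹' S j)
    have hcyl : π ⁻¹' A ⊆ ⋃ w : ⋃ j, W j, cylinder w.1.2 := by
      intro x hx
      obtain ⟨j, hj⟩ := mem_iUnion.1 (hcov hx)
      exact mem_iUnion.2 ⟨⟨cutWord lam (r j) x, mem_iUnion.2 ⟨j, x, hj, rfl⟩⟩, fun _ => rfl⟩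
    have hfin : ∀ s : Set (ℕ → Fin N), ν s ≠ ⊤ :=
      fun s => ((measure_mono (subset_univ s)).trans_lt hνfin).ne
    have hWj : ∀ j, ∑' w : W j, ENNReal.ofReal (wordProd lam w.1.2 ^ t) ≤
        K * ENNReal.ofReal (r j ^ t) := by
      intro j
      calc ∑' w : W j, ENNReal.ofReal (wordProd lam w.1.2 ^ t)
          ≤ ∑' _ : W j, ENNReal.ofReal (r j ^ t) := by
            refine ENNReal.tsum_le_tsum ?_
            rintro ⟨_, x, _, rfl⟩
            refine ENNReal.ofReal_le_ofReal (Real.rpow_le_rpow (hwpos _).le ?_ ht.le)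
            exact (wordProd_prefix lam x _).le.trans (prefixRatio_cut_le hlam (hr j).1 x)
        _ = ((W j).encard : ℝ≥0∞) * ENNReal.ofReal (r j ^ t) := by
            rw [ENNReal.tsum_const]
            rfl
        _ ≤ K * ENNReal.ofReal (r j ^ t) := by
            gcongr
            exact_mod_cast hK (r j) (hr j).1 (hr j).2 (S j) (hS j)
    have h1 : ∑' w : ⋃ j, W j, ENNReal.ofReal (wordProd lam w.1.2 ^ t) ≤
        K * ENNReal.ofReal (ε ^ 2) := by
      calc _ ≤ ∑' j, ∑' w : W j, ENNReal.ofReal (wordProd lam w.1.2 ^ t) :=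
            ENNReal.tsum_iUnion_le_tsum
              (fun w : Σ n, (Fin n → Fin N) => ENNReal.ofReal (wordProd lam w.2 ^ t)) W
        _ ≤ ∑' j, K * ENNReal.ofReal (r j ^ t) := ENNReal.tsum_le_tsum hWj
        _ ≤ _ := by
            rw [ENNReal.tsum_mul_left]
            gcongr
    have h2 : ∑' w : ⋃ j, W j, ENNReal.ofReal (wordProd lam w.1.2 ^ t)⁻¹ *
        ν (cylinder w.1.2) ^ 2 ≤ E := by
      calc _ ≤ ∑' w : Σ n, (Fin n → Fin N), ENNReal.ofReal (wordProd lam w.2 ^ t)⁻¹ *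
              ν (cylinder w.2) ^ 2 :=
            ENNReal.tsum_comp_le_tsum_of_injective Subtype.val_injective
              (fun w : Σ n, (Fin n → Fin N) => ENNReal.ofReal (wordProd lam w.2 ^ t)⁻¹ *
                ν (cylinder w.2) ^ 2)
        _ = E := by
            rw [ENNReal.tsum_sigma', hE]
            refine tsum_congr fun n => ?_
            rw [tsum_fintype]
            refine Finset.sum_congr rfl fun w _ => ?_
            rw [Real.rpow_neg (hwpos ⟨n, w⟩).le]
    calc ν (π ⁻¹' A) ≤ ν (⋃ w : ⋃ j, W j, cylinder w.1.2) := measure_mono hcyl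
      _ ≤ ∑' w : ⋃ j, W j, ν (cylinder w.1.2) := measure_iUnion_le _
      _ ≤ ∑' w : ⋃ j, W j, (ENNReal.ofReal ε⁻¹ * ENNReal.ofReal (wordProd lam w.1.2 ^ t) +
            ENNReal.ofReal ε * (ENNReal.ofReal (wordProd lam w.1.2 ^ t)⁻¹ *
              ν (cylinder w.1.2) ^ 2)) :=
          ENNReal.tsum_le_tsum fun w =>
            le_weighted (Real.rpow_pos_of_pos (hwpos w.1) t) hε (hfin _)
      _ ≤ ENNReal.ofReal ε⁻¹ * (K * ENNReal.ofReal (ε ^ 2)) + ENNReal.ofReal ε * E := by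
          rw [ENNReal.tsum_add, ENNReal.tsum_mul_left, ENNReal.tsum_mul_left]
          gcongr
      _ = ENNReal.ofReal ε * (K + E) := by
          have : ENNReal.ofReal ε⁻¹ * ENNReal.ofReal (ε ^ 2) = ENNReal.ofReal ε := by
            rw [← ENNReal.ofReal_mul (by positivity)]
            congr 1
            field_simp
          rw [mul_left_comm, this, mul_add, mul_comm (K : ℝ≥0∞)]
  have hlim : Tendsto (fun ε : ℝ => ENNReal.ofReal ε * (K + E)) (𝓝[>] 0) (𝓝 0) := by
    have h0 : Tendsto (fun ε : ℝ => ENNReal.ofReal ε) (𝓝[>] 0) (𝓝 0) := by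
      have := (ENNReal.continuous_ofReal.tendsto 0).mono_left
        (nhdsWithin_le_nhds (s := Set.Ioi (0 : ℝ)))
      rwa [ENNReal.ofReal_zero] at this
    have := ENNReal.Tendsto.mul_const (b := (K : ℝ≥0∞) + E) h0
      (Or.inr (ENNReal.add_ne_top.2 ⟨ENNReal.natCast_ne_top K, henergy.ne⟩))
    rwa [zero_mul] at this
  refine hA.not_ge (ge_of_tendsto hlim ?_)
  filter_upwards [self_mem_nhdsWithin] with ε hε using hbound ε hε
end
end
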